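/- arXiv:2210.00630 — 3 statements merged into one kernel-verified Lean document; each statement's English description precedes it below -/
import Mathlib

section
/- For every real number α with 0 ≤ α ≤ 1 there exist constants c₁, c₂, C > 0 such that for every sufficiently large integer n there exists a set S of n points in general position in the plane satisfying c₁·n^{3−α} ≤ τ(S) ≤ c₂·n^{3−α}, and every point q of the plane stabs at most C·n^{3−2α} empty triangles of S. -/
open scoped Classical

noncomputable section

/-- Euclidean distance between two points of the plane `ℝ × ℝ`. -/
def elen (p q : ℝ × ℝ) : ℝ := Real.sqrt ((p.1 - q.1) ^ 2 + (p.2 - q.2) ^ 2)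

/-- Orientation determinant of an ordered triple of points. -/
def orient (a b c : ℝ × ℝ) : ℝ :=
  (b.1 - a.1) * (c.2 - a.2) - (b.2 - a.2) * (c.1 - a.1)

/-- A planar point set is in general position if no three distinct points are collinear. -/
def GeneralPosition (S : Set (ℝ × ℝ)) : Prop :=
  ∀ a ∈ S, ∀ b ∈ S, ∀ c ∈ S, a ≠ b → a ≠ c → b ≠ c →
    ¬ Collinear ℝ ({a, b, c} : Set (ℝ × ℝ))

/-- No two points of `S` share an `x`-coordinate. -/
def DistinctX (S : Set (ℝ × ℝ)) : Prop :=
  ∀ a ∈ S, ∀ b ∈ S, a ≠ b → a.1 ≠ b.1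

/-- `p` lies strictly below the (non-vertical) line through `a` and `b`, where `a.1 < b.1`. -/
def StrictlyBelow (p a b : ℝ × ℝ) : Prop :=
  (b.1 - a.1) * (p.2 - a.2) < (b.2 - a.2) * (p.1 - a.1)

/-- `p` lies strictly above the (non-vertical) line through `a` and `b`, where `a.1 < b.1`. -/
def StrictlyAbove (p a b : ℝ × ℝ) : Prop :=
  (b.2 - a.2) * (p.1 - a.1) < (b.1 - a.1) * (p.2 - a.2)

/-- `Y` is high above `X`: every line through two points of `Y` is above every point of `X`. -/
def HighAbove (Y X : Set (ℝ × ℝ)) : Prop :=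
  ∀ a ∈ Y, ∀ b ∈ Y, a.1 < b.1 → ∀ p ∈ X, StrictlyBelow p a b

/-- `X` is deep below `Y`: every line through two points of `X` is below every point of `Y`. -/
def DeepBelow (X Y : Set (ℝ × ℝ)) : Prop :=
  ∀ a ∈ X, ∀ b ∈ X, a.1 < b.1 → ∀ p ∈ Y, StrictlyAbove p a b

/-- The even-indexed points of `H` in increasing order of `x`-coordinate (`H₀`). -/
def evenPart (H : Finset (ℝ × ℝ)) : Finset (ℝ × ℝ) :=
  H.filter fun p => Even (H.filter fun q => q.1 < p.1).card

/-- The odd-indexed points of `H` in increasing order of `x`-coordinate (`H₁`). -/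
def oddPart (H : Finset (ℝ × ℝ)) : Finset (ℝ × ℝ) :=
  H.filter fun p => ¬ Even (H.filter fun q => q.1 < p.1).card

/-- Horton sets. -/
inductive IsHorton : Finset (ℝ × ℝ) → Prop
  | small (H : Finset (ℝ × ℝ)) (hgp : GeneralPosition ↑H) (hx : DistinctX ↑H)
      (hcard : H.card ≤ 2) : IsHorton H
  | split (H : Finset (ℝ × ℝ)) (hgp : GeneralPosition ↑H) (hx : DistinctX ↑H)
      (hcard : 2 < H.card) (h0 : IsHorton (evenPart H)) (h1 : IsHorton (oddPart H))
      (hhigh : HighAbove ↑(oddPart H) ↑(evenPart H))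
      (hdeep : DeepBelow ↑(evenPart H) ↑(oddPart H)) : IsHorton H

/-- `t` is an empty triangle of the point set `S`: a three-element non-collinear subset of `S`
whose open interior contains no point of `S`. -/
def IsEmptyTriangleOf (S : Set (ℝ × ℝ)) (t : Finset (ℝ × ℝ)) : Prop :=
  t.card = 3 ∧ (↑t : Set (ℝ × ℝ)) ⊆ S ∧ ¬ Collinear ℝ (↑t : Set (ℝ × ℝ)) ∧
    ∀ p ∈ S, p ∉ interior (convexHull ℝ (↑t : Set (ℝ × ℝ)))

/-- `τ S`: the number of empty triangles of `S`. -/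
def tau (S : Set (ℝ × ℝ)) : ℕ :=
  {t : Finset (ℝ × ℝ) | IsEmptyTriangleOf S t}.ncard

/-- The number of empty triangles of `S` stabbed by the point `q`. -/
def stabbedCount (S : Set (ℝ × ℝ)) (q : ℝ × ℝ) : ℕ :=
  {t : Finset (ℝ × ℝ) | IsEmptyTriangleOf S t ∧
    q ∈ interior (convexHull ℝ (↑t : Set (ℝ × ℝ)))}.ncard

/-- The number of empty triangles of `S` having `q` as a vertex. -/
def incidentCount (S : Set (ℝ × ℝ)) (q : ℝ × ℝ) : ℕ :=
  {t : Finset (ℝ × ℝ) | IsEmptyTriangleOf S t ∧ q ∈ t}.ncard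

section
lemma orient_affine (a b x y : ℝ × ℝ) (s t : ℝ) (h : s + t = 1) :
    orient a b (s • x + t • y) = s * orient a b x + t * orient a b y := by
  have : s = 1 - t := by linarith
  subst this
  simp only [orient, Prod.fst_add, Prod.snd_add, Prod.smul_fst, Prod.smul_snd, smul_eq_mul]
  ring

lemma orient_rot (a b c : ℝ × ℝ) : orient b c a = orient a b c := by
  simp only [orient]; ring

lemma orient_swap (a b c : ℝ × ℝ) : orient b a c = - orient a b c := by
  simp only [orient]; ring

lemma orient_sum (a b c p : ℝ × ℝ) :
    orient a b p + orient b c p + orient c a p = orient a b c := by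
  simp only [orient]; ring

/-- strict inside -/
def Ins (a b c p : ℝ × ℝ) : Prop :=
  0 < orient a b c * orient a b p ∧ 0 < orient a b c * orient b c p ∧
    0 < orient a b c * orient c a p

/-- closed inside -/
def Cl (a b c p : ℝ × ℝ) : Prop :=
  0 ≤ orient a b c * orient a b p ∧ 0 ≤ orient a b c * orient b c p ∧
    0 ≤ orient a b c * orient c a p

lemma Ins.cl {a b c p : ℝ × ℝ} (h : Ins a b c p) : Cl a b c p := ⟨h.1.le, h.2.1.le, h.2.2.le⟩

lemma Ins.rot {a b c p : ℝ × ℝ} (h : Ins a b c p) : Ins b c a p := by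
  obtain ⟨h1, h2, h3⟩ := h
  refine ⟨?_, ?_, ?_⟩ <;> rw [orient_rot a b c] <;> assumption

lemma Ins.swap {a b c p : ℝ × ℝ} (h : Ins a b c p) : Ins b a c p := by
  obtain ⟨h1, h2, h3⟩ := h
  refine ⟨?_, ?_, ?_⟩
  · rw [orient_swap a b c, orient_swap a b p]; linarith
  · rw [orient_swap a b c, orient_swap c a p]; linarith
  · rw [orient_swap a b c, orient_swap b c p]; linarith

lemma hull_le (a b c d e p : ℝ × ℝ) (s : ℝ) (hp : p ∈ convexHull ℝ ({a, b, c} : Set (ℝ × ℝ)))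
    (ha : 0 ≤ s * orient d e a) (hb : 0 ≤ s * orient d e b) (hc : 0 ≤ s * orient d e c) :
    0 ≤ s * orient d e p := by
  have hconv : Convex ℝ {p : ℝ × ℝ | 0 ≤ s * orient d e p} := by
    intro x hx y hy u v hu hv huv
    simp only [Set.mem_ofPred_eq] at *
    rw [orient_affine _ _ _ _ _ _ huv]
    have := mul_nonneg hu hx
    have := mul_nonneg hv hy
    nlinarith
  have : convexHull ℝ ({a, b, c} : Set (ℝ × ℝ)) ⊆ {p : ℝ × ℝ | 0 ≤ s * orient d e p} := by
    apply convexHull_min _ hconv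
    intro x hx
    simp only [Set.mem_insert_iff, Set.mem_singleton_iff] at hx
    rcases hx with rfl | rfl | rfl <;> assumption
  exact this hp

lemma orient_self1 (a b : ℝ × ℝ) : orient a b a = 0 := by simp only [orient]; ring
lemma orient_self2 (a b : ℝ × ℝ) : orient a b b = 0 := by simp only [orient]; ring

lemma hull_cl {a b c p : ℝ × ℝ} (hp : p ∈ convexHull ℝ ({a, b, c} : Set (ℝ × ℝ))) :
    Cl a b c p := by
  have e1 : orient b c a = orient a b c := orient_rot a b c
  have e2 : orient c a b = orient a b c := (orient_rot c a b).symm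
  have hs := mul_self_nonneg (orient a b c)
  refine ⟨hull_le a b c _ _ p _ hp ?_ ?_ ?_, hull_le a b c _ _ p _ hp ?_ ?_ ?_,
    hull_le a b c _ _ p _ hp ?_ ?_ ?_⟩ <;>
  simp only [orient_self1, orient_self2, e1, e2, mul_zero, le_refl, hs]

lemma cont_orient (a b : ℝ × ℝ) : Continuous (fun p => orient a b p) := by
  unfold orient; fun_prop

lemma cl_hull {a b c p : ℝ × ℝ} (h0 : orient a b c ≠ 0) (h : Cl a b c p) :
    p ∈ convexHull ℝ ({a, b, c} : Set (ℝ × ℝ)) := by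
  obtain ⟨h1, h2, h3⟩ := h
  set D := orient a b c with hD
  have hDD : 0 < D * D := mul_self_pos.mpr h0
  have hs := orient_sum a b c p
  have key : p = (D * orient b c p / (D * D)) • a + (D * orient c a p / (D * D)) • b
      + (D * orient a b p / (D * D)) • c := by
    ext
    · simp only [Prod.fst_add, Prod.smul_fst, smul_eq_mul]
      field_simp
      simp only [hD, orient]; ring
    · simp only [Prod.snd_add, Prod.smul_snd, smul_eq_mul]
      field_simp
      simp only [hD, orient]; ring
  rw [key]
  have hc := convex_convexHull ℝ ({a, b, c} : Set (ℝ × ℝ))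
  have ha' : a ∈ convexHull ℝ ({a, b, c} : Set (ℝ × ℝ)) := subset_convexHull _ _ (by simp)
  have hb' : b ∈ convexHull ℝ ({a, b, c} : Set (ℝ × ℝ)) := subset_convexHull _ _ (by simp)
  have hc' : c ∈ convexHull ℝ ({a, b, c} : Set (ℝ × ℝ)) := subset_convexHull _ _ (by simp)
  have := hc.sum_mem (t := (Finset.univ : Finset (Fin 3)))
    (w := ![D * orient b c p / (D * D), D * orient c a p / (D * D), D * orient a b p / (D * D)])
    (z := ![a, b, c])
    (by intro i _; fin_cases i <;> simp <;> positivity)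
    (by
      simp [Fin.sum_univ_three]
      field_simp
      linarith)
    (by intro i _; fin_cases i <;> simp <;> assumption)
  simpa [Fin.sum_univ_three] using this

lemma interior_iff {a b c p : ℝ × ℝ} (h0 : orient a b c ≠ 0) :
    p ∈ interior (convexHull ℝ ({a, b, c} : Set (ℝ × ℝ))) ↔ Ins a b c p := by
  constructor
  · intro hp
    -- move outward
    have key : ∀ d e f : ℝ × ℝ, orient d e f ≠ 0 →
        (∀ x ∈ convexHull ℝ ({a, b, c} : Set (ℝ × ℝ)), 0 ≤ orient d e f * orient d e x) →
        0 < orient d e f * orient d e p := by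
      intro d e f hne hall
      rcases (hall p (interior_subset hp)).lt_or_eq with h | h
      · exact h
      exfalso
      have hz : orient d e p = 0 := by
        rcases mul_eq_zero.mp h.symm with h | h
        · exact absurd h hne
        · exact h
      have hcont : Continuous (fun t : ℝ => (1 - t) • p + t • f) := by fun_prop
      have hop : IsOpen ((fun t : ℝ => (1 - t) • p + t • f) ⁻¹'
        (interior (convexHull ℝ ({a, b, c} : Set (ℝ × ℝ))))) := isOpen_interior.preimage hcont
      have h0m : (0:ℝ) ∈ ((fun t : ℝ => (1 - t) • p + t • f) ⁻¹'
        (interior (convexHull ℝ ({a, b, c} : Set (ℝ × ℝ))))) := by simpa using hp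
      obtain ⟨r, hr, hball⟩ := Metric.isOpen_iff.mp hop 0 h0m
      have hm : (-(r/2)) ∈ Metric.ball (0:ℝ) r := by
        simp [abs_of_pos hr]; linarith
      have h1 := hall _ (interior_subset (hball hm))
      simp only at h1
      rw [orient_affine _ _ _ _ _ _ (by ring), hz] at h1
      have : 0 < orient d e f * orient d e f := mul_self_pos.mpr hne
      nlinarith
    refine ⟨key a b c h0 fun x hx => (hull_cl hx).1, ?_, ?_⟩
    · have := key b c a (by rwa [orient_rot a b c]) (fun x hx => by
        rw [orient_rot a b c]; exact (hull_cl hx).2.1)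
      rwa [orient_rot a b c] at this
    · have := key c a b (by rwa [← orient_rot c a b]) (fun x hx => by
        rw [← orient_rot c a b]; exact (hull_cl hx).2.2)
      rwa [← orient_rot c a b] at this
  · intro h
    have hsub : {x | Ins a b c x} ⊆ convexHull ℝ ({a, b, c} : Set (ℝ × ℝ)) :=
      fun x hx => cl_hull h0 (Ins.cl hx)
    have hopen : IsOpen {x | Ins a b c x} := by
      have o1 := isOpen_lt (continuous_const (y := (0:ℝ)))
        (continuous_const (y := orient a b c) |>.mul (cont_orient a b))
      have o2 := isOpen_lt (continuous_const (y := (0:ℝ)))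
        (continuous_const (y := orient a b c) |>.mul (cont_orient b c))
      have o3 := isOpen_lt (continuous_const (y := (0:ℝ)))
        (continuous_const (y := orient a b c) |>.mul (cont_orient c a))
      exact o1.inter (o2.inter o3)
    exact interior_maximal hsub hopen h

lemma collinear_orient {a b c : ℝ × ℝ} (h : Collinear ℝ ({a, b, c} : Set (ℝ × ℝ))) :
    orient a b c = 0 := by
  rw [collinear_iff_of_mem (p₀ := a) (by simp)] at h
  obtain ⟨v, hv⟩ := h
  obtain ⟨r, hr⟩ := hv b (by simp)
  obtain ⟨s, hs⟩ := hv c (by simp)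
  rw [hr, hs]
  simp [orient]; ring

lemma cone_lemma {x y x' y' c q : ℝ × ℝ} {σ : ℝ} (h1 : orient x y c ≠ 0)
    (h2 : orient x' y' c ≠ 0) (hc1 : Cl x y c q) (hc2 : Cl x' y' c q) (hq : q ≠ c)
    (k1 : 0 < σ * orient x x' c) (k2 : 0 < σ * orient x y' c)
    (k3 : 0 < σ * orient y x' c) (k4 : 0 < σ * orient y y' c) : False := by
  have nz : ∀ x y : ℝ × ℝ, orient x y c ≠ 0 → Cl x y c q →
      0 < orient x y c * orient y c q + orient x y c * orient c x q := by
    intro x y h1 hc1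
    rcases (add_nonneg hc1.2.1 hc1.2.2).lt_or_eq with h | h
    · exact h
    exfalso
    have e1 : orient x y c * orient y c q = 0 := by linarith [hc1.2.1, hc1.2.2]
    have e2 : orient x y c * orient c x q = 0 := by linarith [hc1.2.1, hc1.2.2]
    have e1' := (mul_eq_zero.mp e1).resolve_left h1
    have e2' := (mul_eq_zero.mp e2).resolve_left h1
    apply hq
    ext
    · have : orient x y c * (q.1 - c.1) = orient y c q * (x.1 - c.1) + orient c x q * (y.1 - c.1) := by
        simp only [orient]; ring
      rw [e1', e2'] at this
      have := (mul_eq_zero.mp (by linarith : orient x y c * (q.1 - c.1) = 0)).resolve_left h1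
      linarith
    · have : orient x y c * (q.2 - c.2) = orient y c q * (x.2 - c.2) + orient c x q * (y.2 - c.2) := by
        simp only [orient]; ring
      rw [e1', e2'] at this
      have := (mul_eq_zero.mp (by linarith : orient x y c * (q.2 - c.2) = 0)).resolve_left h1
      linarith
  have n1 := nz x y h1 hc1
  have n2 := nz x' y' h2 hc2
  have a1 := hc1.2.1
  have a2 := hc1.2.2
  have b1 := hc2.2.1
  have b2 := hc2.2.2
  have id : orient y c q * orient y' c q * orient x x' c + orient y c q * orient c x' q * orient x y' c
      + orient c x q * orient y' c q * orient y x' c + orient c x q * orient c x' q * orient y y' c = 0 := by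
    simp only [orient]; ring
  set l := orient x y c * orient y c q with hl
  set m := orient x y c * orient c x q with hm
  set l' := orient x' y' c * orient y' c q with hl'
  set m' := orient x' y' c * orient c x' q with hm'
  have id2 : l * l' * (σ * orient x x' c) + l * m' * (σ * orient x y' c)
      + m * l' * (σ * orient y x' c) + m * m' * (σ * orient y y' c) = 0 := by
    rw [hl, hm, hl', hm']
    linear_combination (orient x y c * orient x' y' c * σ) * id
  have p1 := mul_nonneg (mul_nonneg a1 b1) k1.le
  have p2 := mul_nonneg (mul_nonneg a1 b2) k2.le
  have p3 := mul_nonneg (mul_nonneg a2 b1) k3.le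
  have p4 := mul_nonneg (mul_nonneg a2 b2) k4.le
  have z1 := (mul_eq_zero.mp (by linarith : l * l' * (σ * orient x x' c) = 0)).resolve_right k1.ne'
  have z2 := (mul_eq_zero.mp (by linarith : l * m' * (σ * orient x y' c) = 0)).resolve_right k2.ne'
  have z3 := (mul_eq_zero.mp (by linarith : m * l' * (σ * orient y x' c) = 0)).resolve_right k3.ne'
  have z4 := (mul_eq_zero.mp (by linarith : m * m' * (σ * orient y y' c) = 0)).resolve_right k4.ne'
  have := mul_pos n1 n2
  nlinarith
end


section
def hh : ℕ → ℝ → ℤ → ℝ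
  | 0, _, _ => 0
  | K + 1, δ, t => ((t % 2 : ℤ) : ℝ) + δ * hh K δ (t / 2)

def HH (h : ℤ → ℝ) (x y z : ℤ) : ℝ :=
  ((y : ℝ) - x) * (h z - h x) - (h y - h x) * ((z : ℝ) - x)

def bs (f : ℕ) (z : ℤ) : ℝ := 2 * (((z / 2 ^ f) % 2 : ℤ) : ℝ) - 1

lemma bs_flip (f : ℕ) (z r : ℤ) (hr : Odd r) : bs f (z + 2 ^ f * r) = - bs f z := by
  unfold bs
  rw [Int.add_mul_ediv_left _ _ (by positivity)]
  obtain ⟨k, rfl⟩ := hr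
  rcases Int.emod_two_eq_zero_or_one (z / 2 ^ f) with h | h
  · have : (z / 2 ^ f + (2 * k + 1)) % 2 = 1 := by omega
    rw [h, this]; norm_num
  · have : (z / 2 ^ f + (2 * k + 1)) % 2 = 0 := by omega
    rw [h, this]; norm_num

lemma hh_cont (K : ℕ) (t : ℤ) : Continuous (fun δ => hh K δ t) := by
  induction K generalizing t with
  | zero => simp only [hh]; fun_prop
  | succ K ih => simp only [hh]; have := ih (t / 2); fun_prop

open Filter Topology

lemma ev_pos (d : ℕ) (f g : ℝ → ℝ) (hg : Continuous g) (h0 : 0 < g 0)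
    (hf : ∀ ε, f ε = ε ^ d * g ε) : ∀ᶠ ε in 𝓝[>] (0:ℝ), 0 < f ε := by
  have h1 : ∀ᶠ ε in 𝓝[>] (0:ℝ), 0 < g ε :=
    (hg.tendsto 0).eventually (lt_mem_nhds h0) |>.filter_mono nhdsWithin_le_nhds
  filter_upwards [h1, self_mem_nhdsWithin] with ε h1 h2
  rw [hf]
  have : 0 < ε := h2
  positivity

lemma HH_ev (f K : ℕ) (hf : f < K) (x y z : ℤ) (hxy : x ≠ y) (hd : (2:ℤ) ^ (f + 1) ∣ y - x)
    (r : ℤ) (hr : Odd r) (hz : z - x = 2 ^ f * r) :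
    ∀ᶠ δ in 𝓝[>] (0:ℝ), 0 < bs f z * ((y:ℝ) - x) * HH (hh K δ) x y z := by
  induction f generalizing K x y z with
  | zero =>
    obtain ⟨K, rfl⟩ : ∃ k, K = k + 1 := ⟨K - 1, by omega⟩
    apply ev_pos 0 _ (fun δ => bs 0 z * ((y:ℝ) - x) * HH (hh (K+1) δ) x y z) _ _ (by simp)
    · unfold HH
      have := hh_cont (K+1) x
      have := hh_cont (K+1) y
      have := hh_cont (K+1) z
      fun_prop
    · simp only [HH, hh, bs, zero_mul, add_zero, pow_zero, Int.ediv_one]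
      have hyx : y % 2 = x % 2 := by
        simp at hd; omega
      rw [hyx]
      have hne : ((y:ℝ) - x) ≠ 0 := by
        intro h; apply hxy; have : (y:ℝ) = x := by linarith
        exact_mod_cast this.symm
      have hp : 0 < ((y:ℝ) - x) * ((y:ℝ) - x) := mul_self_pos.mpr hne
      obtain ⟨k, rfl⟩ := hr
      have hzx : (x % 2 = 0 ∧ z % 2 = 1) ∨ (x % 2 = 1 ∧ z % 2 = 0) := by
        simp at hz; omega
      rcases hzx with ⟨h1, h2⟩ | ⟨h1, h2⟩ <;> rw [h1, h2] <;> norm_num <;> nlinarith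
  | succ f ih =>
    obtain ⟨K, rfl⟩ : ∃ k, K = k + 1 := ⟨K - 1, by omega⟩
    obtain ⟨w, hw⟩ := hd
    have e1 : y = x + 2 * (2 ^ (f+1) * w) := by rw [pow_succ] at hw; linarith
    have e2 : z = x + 2 * (2 ^ f * r) := by rw [pow_succ] at hz; linarith
    have hy2 : y / 2 = x / 2 + 2 ^ (f+1) * w := by omega
    have hz2 : z / 2 = x / 2 + 2 ^ f * r := by omega
    have hy3 : y % 2 = x % 2 := by omega
    have hz3 : z % 2 = x % 2 := by omega
    have := ih K (by omega) (x/2) (y/2) (z/2) (by omega) ⟨w, by linarith⟩ (by linarith)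
    filter_upwards [this, self_mem_nhdsWithin] with δ hδ hδ0
    have hδ0 : 0 < δ := hδ0
    have hb : bs (f+1) z = bs f (z/2) := by
      unfold bs
      rw [pow_succ', Int.ediv_ediv_of_nonneg (by norm_num)]
    have cy : (y:ℝ) - x = 2 * (((y/2:ℤ):ℝ) - ((x/2:ℤ):ℝ)) := by
      have : y - x = 2 * (y/2 - x/2) := by omega
      exact_mod_cast this
    have cz : (z:ℝ) - x = 2 * (((z/2:ℤ):ℝ) - ((x/2:ℤ):ℝ)) := by
      have : z - x = 2 * (z/2 - x/2) := by omega
      exact_mod_cast this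
    have : bs (f+1) z * ((y:ℝ) - x) * HH (hh (K+1) δ) x y z
        = 4 * δ * (bs f (z/2) * (((y/2:ℤ):ℝ) - ((x/2:ℤ):ℝ)) * HH (hh K δ) (x/2) (y/2) (z/2)) := by
      rw [hb]
      simp only [HH, hh, cy, cz, hy3, hz3]
      ring
    rw [this]
    positivity

/-- good Horton function -/
lemma exists_h (K : ℕ) : ∃ h : ℤ → ℝ, ∀ x ∈ Finset.Ico (0:ℤ) (2^K), ∀ y ∈ Finset.Ico (0:ℤ) (2^K),
    ∀ z ∈ Finset.Ico (0:ℤ) (2^K), ∀ f : ℕ, ∀ r : ℤ, x ≠ y → (2:ℤ) ^ (f + 1) ∣ y - x → Odd r →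
    z - x = 2 ^ f * r → 0 < bs f z * ((y:ℝ) - x) * HH h x y z := by
  have : ∀ᶠ δ in 𝓝[>] (0:ℝ), ∀ x ∈ Finset.Ico (0:ℤ) (2^K), ∀ y ∈ Finset.Ico (0:ℤ) (2^K),
    ∀ z ∈ Finset.Ico (0:ℤ) (2^K), ∀ f ∈ Finset.range K, (x ≠ y ∧ (2:ℤ) ^ (f + 1) ∣ y - x ∧ ∃ r, Odd r ∧
    z - x = 2 ^ f * r) → 0 < bs f z * ((y:ℝ) - x) * HH (hh K δ) x y z := by
    simp only [Filter.eventually_all_finset]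
    intro x hx y hy z hz f hf
    by_cases h : (x ≠ y ∧ (2:ℤ) ^ (f + 1) ∣ y - x ∧ ∃ r, Odd r ∧ z - x = 2 ^ f * r)
    · obtain ⟨h1, h2, r, h3, h4⟩ := h
      filter_upwards [HH_ev f K (Finset.mem_range.mp hf) x y z h1 h2 r h3 h4] with δ h _
      exact h
    · filter_upwards with δ h'
      exact absurd h' h
  obtain ⟨δ, hδ⟩ := this.exists
  refine ⟨hh K δ, fun x hx y hy z hz f r h1 h2 h3 h4 => hδ x hx y hy z hz f ?_ ⟨h1, h2, r, h3, h4⟩⟩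
  rw [Finset.mem_range]
  by_contra hcon
  push Not at hcon
  have hle : (2:ℤ)^K ≤ 2^f := pow_le_pow_right₀ (by norm_num) hcon
  rw [Finset.mem_Ico] at hx hz
  have hr0 : r ≠ 0 := by rintro rfl; simp at h3
  have : (2:ℤ)^f ≤ |z - x| := by
    rw [h4, abs_mul, abs_of_pos (by positivity : (0:ℤ) < 2^f)]
    have := Int.one_le_abs hr0
    nlinarith [(by positivity : (0:ℤ) < 2^f)]
  rcases abs_cases (z - x) with ⟨h, _⟩ | ⟨h, _⟩ <;> omega

/-- valuations of triples -/
lemma val_triple (x y z : ℤ) (h1 : x ≠ y) (h2 : x ≠ z) (h3 : y ≠ z) :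
    ∃ f : ℕ, ((2:ℤ)^(f+1) ∣ y - x ∧ ∃ r, Odd r ∧ z - x = 2^f * r) ∨
      ((2:ℤ)^(f+1) ∣ z - x ∧ ∃ r, Odd r ∧ y - x = 2^f * r) ∨
      ((2:ℤ)^(f+1) ∣ z - y ∧ ∃ r, Odd r ∧ x - y = 2^f * r) := by
  have dec : ∀ n : ℤ, n ≠ 0 → ∃ f : ℕ, ∃ r, Odd r ∧ n = 2^f * r := by
    intro n hn
    obtain ⟨k, m, hm, hk⟩ := Nat.exists_eq_two_pow_mul_odd (n := n.natAbs) (by omega)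
    rcases Int.natAbs_eq n with h | h
    · exact ⟨k, m, by exact_mod_cast hm, by rw [h, hk]; push_cast; ring⟩
    · refine ⟨k, -m, ?_, by rw [h, hk]; push_cast; ring⟩
      have : Odd (m:ℤ) := by exact_mod_cast hm
      exact this.neg
  obtain ⟨a, o1, ho1, e1⟩ := dec (y - x) (by omega)
  obtain ⟨b, o2, ho2, e2⟩ := dec (z - x) (by omega)
  rcases lt_trichotomy a b with h | h | h
  · refine ⟨a, Or.inr (Or.inl ⟨?_, o1, ho1, e1⟩)⟩
    rw [e2]; exact Dvd.dvd.mul_right (pow_dvd_pow _ h) _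
  · subst h
    refine ⟨a, Or.inr (Or.inr ⟨?_, -o1, ?_, by linarith⟩)⟩
    · have : z - y = 2^a * (o2 - o1) := by linarith
      rw [this, pow_succ]
      apply mul_dvd_mul_left
      exact (Odd.sub_odd ho2 ho1).two_dvd
    · exact ho1.neg
  · refine ⟨b, Or.inl ⟨?_, o2, ho2, e2⟩⟩
    rw [e1]; exact Dvd.dvd.mul_right (pow_dvd_pow _ h) _
end


section
open Filter Topology

def det3 (A B C : ℤ × ℤ) : ℤ := (B.1 - A.1) * (C.2 - A.2) - (B.2 - A.2) * (C.1 - A.1)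

def grid (K : ℕ) : Finset (ℤ × ℤ) := Finset.Ico 0 (2^K) ×ˢ Finset.Ico 0 (2^K)

structure Good (K L : ℕ) (P : ℤ × ℤ → ℕ → ℝ × ℝ) : Prop where
  f1 : ∀ A ∈ grid K, ∀ B ∈ grid K, ∀ C ∈ grid K, ∀ l < L, ∀ l' < L, ∀ l'' < L,
    0 < det3 A B C → 0 < orient (P A l) (P B l') (P C l'')
  f2 : ∀ g : ℤ × ℤ, g ≠ 0 → ∃ β : ℕ → ℤ × ℤ → ℝ,
    (∀ (f : ℕ) (Z : ℤ × ℤ) (r : ℤ), Odd r → β f (Z + (2^f*r) • g) = - β f Z) ∧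
    ∀ (f : ℕ) (X : ℤ × ℤ) (y z : ℤ), X ∈ grid K → X + y • g ∈ grid K → X + z • g ∈ grid K →
      y ≠ 0 → (2:ℤ)^(f+1) ∣ y → (∃ r, Odd r ∧ z = 2^f*r) → ∀ l < L, ∀ l' < L, ∀ l'' < L,
      0 < β f (X + z • g) * y * orient (P X l) (P (X + y • g) l') (P (X + z • g) l'')
  f3 : ∀ A ∈ grid K, ∀ B ∈ grid K, A ≠ B → ∀ l l', l < l' → l' < L → ∀ l'' < L,
    0 < ((2^K * (B.2 - A.2) - (B.1 - A.1) : ℤ) : ℝ) * orient (P A l) (P A l') (P B l'')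
  f4 : ∀ A ∈ grid K, ∀ l l' l'', l < l' → l' < l'' → l'' < L →
    orient (P A l) (P A l') (P A l'') < 0
  f5 : ∀ A ∈ grid K, ∀ l < L, |(P A l).1 - A.1| ≤ 1/2^(K+2) ∧ |(P A l).2 - A.2| ≤ 1/2^(K+2)

def PP (h : ℤ → ℝ) (M ε : ℝ) (A : ℤ × ℤ) (l : ℕ) : ℝ × ℝ :=
  ((A.1:ℝ) + ε^2 * h A.2 + ε^3 * M * l, (A.2:ℝ) + ε * h A.1 + ε^3 * l - ε^4 * l^2)

lemma dec_two (n : ℤ) (hn : n ≠ 0) : ∃ f : ℕ, ∃ r, Odd r ∧ n = 2^f * r := by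
  obtain ⟨k, m, hm, hk⟩ := Nat.exists_eq_two_pow_mul_odd (n := n.natAbs) (by omega)
  have hm' : Odd (m:ℤ) := by exact_mod_cast hm
  rcases Int.natAbs_eq n with h | h
  · exact ⟨k, m, hm', by rw [h, hk]; push_cast; ring⟩
  · exact ⟨k, -m, hm'.neg, by rw [h, hk]; push_cast; ring⟩

lemma HH_ne {K : ℕ} {h : ℤ → ℝ} (hH : ∀ x ∈ Finset.Ico (0:ℤ) (2^K), ∀ y ∈ Finset.Ico (0:ℤ) (2^K),
    ∀ z ∈ Finset.Ico (0:ℤ) (2^K), ∀ f : ℕ, ∀ r : ℤ, x ≠ y → (2:ℤ) ^ (f + 1) ∣ y - x → Odd r →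
    z - x = 2 ^ f * r → 0 < bs f z * ((y:ℝ) - x) * HH h x y z)
    (a d : ℤ) (e : ℕ) (o : ℤ) (ho : Odd o) (ha : a = 2^e*o) (f : ℕ) (y z : ℤ)
    (hx : d ∈ Finset.Ico (0:ℤ) (2^K)) (hy : d + y * a ∈ Finset.Ico (0:ℤ) (2^K))
    (hz : d + z * a ∈ Finset.Ico (0:ℤ) (2^K)) (y0 : y ≠ 0) (hd : (2:ℤ)^(f+1) ∣ y)
    (r : ℤ) (hr : Odd r) (hzr : z = 2^f*r) :
    0 < bs (f+e) (d + z * a) * a * y * HH h d (d + y * a) (d + z * a) := by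
  have ha0 : a ≠ 0 := by
    rintro rfl
    have : o ≠ 0 := by rintro rfl; simp at ho
    have : (2:ℤ)^e * o ≠ 0 := by positivity
    omega
  have := hH d hx (d + y*a) hy (d + z*a) hz (f+e) (r*o) (by
      intro h
      have : y * a = 0 := by linarith
      rcases mul_eq_zero.mp this with h | h <;> contradiction)
    (by
      rw [ha, add_sub_cancel_left]
      rw [show f + e + 1 = (f+1) + e by ring, pow_add]
      exact mul_dvd_mul hd (dvd_mul_right _ _)) (hr.mul ho)
    (by rw [hzr, ha]; ring)
  push_cast at this ⊢
  have e1 : ((d:ℝ) + y * a - d) = a * y := by ring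
  rw [e1] at this
  calc _ < _ := this
    _ = _ := by ring

set_option maxHeartbeats 1000000 in
lemma exists_good (K L : ℕ) : ∃ P, Good K L P := by
  obtain ⟨h, hH⟩ := exists_h K
  set M : ℝ := 2^K with hM
  have E1 : ∀ᶠ ε in 𝓝[>] (0:ℝ), ∀ A ∈ grid K, ∀ B ∈ grid K, ∀ C ∈ grid K, ∀ l ∈ Finset.range L,
      ∀ l' ∈ Finset.range L, ∀ l'' ∈ Finset.range L, 
      0 < det3 A B C → 0 < orient (PP h M ε A l) (PP h M ε B l') (PP h M ε C l'') := by
    simp only [Filter.eventually_all_finset]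
    intro A hA B hB C hC l hl l' hl' l'' hl''
    by_cases hd : 0 < det3 A B C
    · have : ∀ᶠ ε in 𝓝[>] (0:ℝ), 0 < orient (PP h M ε A l) (PP h M ε B l') (PP h M ε C l'') := by
        apply ev_pos 0 _ (fun ε => orient (PP h M ε A l) (PP h M ε B l') (PP h M ε C l'')) _ _ (by simp)
        · unfold orient PP; fun_prop
        · have : (0:ℝ) < (det3 A B C : ℤ) := by exact_mod_cast hd
          simp only [det3] at this
          push_cast at this
          simpa [orient, PP] using this
      filter_upwards [this] with ε h _ using h
    · filter_upwards with ε h using absurd h hd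
  have E2a : ∀ᶠ ε in 𝓝[>] (0:ℝ), ∀ A ∈ grid K, ∀ B ∈ grid K, ∀ C ∈ grid K, ∀ l ∈ Finset.range L,
      ∀ l' ∈ Finset.range L, ∀ l'' ∈ Finset.range L, 
      (det3 A B C = 0 ∧ HH h A.1 B.1 C.1 ≠ 0) → 
      0 < HH h A.1 B.1 C.1 * orient (PP h M ε A l) (PP h M ε B l') (PP h M ε C l'') := by
    simp only [Filter.eventually_all_finset]
    intro A hA B hB C hC l hl l' hl' l'' hl''
    by_cases hd : (det3 A B C = 0 ∧ HH h A.1 B.1 C.1 ≠ 0)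
    · have : ∀ᶠ ε in 𝓝[>] (0:ℝ), 0 < HH h A.1 B.1 C.1 * orient (PP h M ε A l) (PP h M ε B l') (PP h M ε C l'') := by
        apply ev_pos 1 _ (fun ε => HH h A.1 B.1 C.1 * (
          ((B.1 - A.1 : ℝ) * ((h C.1 - h A.1) + ε^2*(l''-l) - ε^3*(l''^2-l^2))
            - ((h B.1 - h A.1) + ε^2*(l'-l) - ε^3*(l'^2-l^2)) * (C.1 - A.1))
          + ε * (((h B.2 - h A.2) + ε * M * (l' - l)) * (C.2 - A.2) -
              (B.2 - A.2) * ((h C.2 - h A.2) + ε * M * (l'' - l)))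
          + ε^2 * (((h B.2 - h A.2) + ε * M * (l' - l)) * ((h C.1 - h A.1) + ε^2*(l''-l) - ε^3*(l''^2-l^2))
            - ((h B.1 - h A.1) + ε^2*(l'-l) - ε^3*(l'^2-l^2)) * ((h C.2 - h A.2) + ε * M * (l'' - l))))) _ _ _
        · fun_prop
        · have : 0 < HH h A.1 B.1 C.1 * HH h A.1 B.1 C.1 := mul_self_pos.mpr hd.2
          simpa [HH] using this
        · intro ε
          have hd0 : ((det3 A B C : ℤ) : ℝ) = 0 := by exact_mod_cast hd.1
          simp only [det3] at hd0
          push_cast at hd0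
          simp only [orient, PP]
          linear_combination (HH h A.1 B.1 C.1) * hd0
      filter_upwards [this] with ε h _ using h
    · filter_upwards with ε h using absurd h hd
  have E2b : ∀ᶠ ε in 𝓝[>] (0:ℝ), ∀ A ∈ grid K, ∀ B ∈ grid K, ∀ C ∈ grid K, ∀ l ∈ Finset.range L,
      ∀ l' ∈ Finset.range L, ∀ l'' ∈ Finset.range L, 
      (A.1 = B.1 ∧ A.1 = C.1 ∧ HH h A.2 B.2 C.2 ≠ 0) → 
      0 < (-HH h A.2 B.2 C.2) * orient (PP h M ε A l) (PP h M ε B l') (PP h M ε C l'') := by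
    simp only [Filter.eventually_all_finset]
    intro A hA B hB C hC l hl l' hl' l'' hl''
    by_cases hd : (A.1 = B.1 ∧ A.1 = C.1 ∧ HH h A.2 B.2 C.2 ≠ 0)
    · have : ∀ᶠ ε in 𝓝[>] (0:ℝ), 0 < (-HH h A.2 B.2 C.2) * orient (PP h M ε A l) (PP h M ε B l') (PP h M ε C l'') := by
        apply ev_pos 2 _ (fun ε => (-HH h A.2 B.2 C.2) * (
          (((h B.2 - h A.2) + ε * M * (l' - l)) * (C.2 - A.2) -
              (B.2 - A.2) * ((h C.2 - h A.2) + ε * M * (l'' - l)))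
          + ε^3 * (((h B.2 - h A.2) + ε * M * (l' - l)) * ((l''-l) - ε*(l''^2-l^2))
            - ((l'-l) - ε*(l'^2-l^2)) * ((h C.2 - h A.2) + ε * M * (l'' - l))))) _ _ _
        · fun_prop
        · have : 0 < HH h A.2 B.2 C.2 * HH h A.2 B.2 C.2 := mul_self_pos.mpr hd.2.2
          simp only [HH] at *
          norm_num
          nlinarith
        · intro ε
          simp only [orient, PP, ← hd.1, ← hd.2.1]
          ring
      filter_upwards [this] with ε h _ using h
    · filter_upwards with ε h using absurd h hd
  have E3 : ∀ᶠ ε in 𝓝[>] (0:ℝ), ∀ A ∈ grid K, ∀ B ∈ grid K, ∀ l ∈ Finset.range L,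
      ∀ l' ∈ Finset.range L, ∀ l'' ∈ Finset.range L, (A ≠ B ∧ l < l') → 
      0 < ((2^K * (B.2 - A.2) - (B.1 - A.1) : ℤ) : ℝ) * orient (PP h M ε A l) (PP h M ε A l') (PP h M ε B l'') := by
    simp only [Filter.eventually_all_finset]
    intro A hA B hB l hl l' hl' l'' hl''
    by_cases hd : (A ≠ B ∧ l < l')
    · have hne : (2^K * (B.2 - A.2) - (B.1 - A.1) : ℤ) ≠ 0 := by
        intro h0
        simp only [grid, Finset.mem_product, Finset.mem_Ico] at hA hB
        apply hd.1
        have h2 : B.2 - A.2 = 0 := by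
          by_contra hne
          have : 1 ≤ |B.2 - A.2| := Int.one_le_abs hne
          have h3 : |B.1 - A.1| < 2^K := by rw [abs_lt]; constructor <;> linarith
          have h4 : |B.1 - A.1| = 2^K * |B.2 - A.2| := by
            rw [show B.1 - A.1 = 2^K * (B.2 - A.2) by linarith, abs_mul, abs_of_pos (by positivity)]
          nlinarith [(by positivity : (0:ℤ) < 2^K)]
        rw [h2] at h0
        ext <;> linarith
      have hne' : ((2^K * (B.2 - A.2) - (B.1 - A.1) : ℤ) : ℝ) ≠ 0 := by exact_mod_cast hne
      have : ∀ᶠ ε in 𝓝[>] (0:ℝ), 0 < ((2^K * (B.2 - A.2) - (B.1 - A.1) : ℤ) : ℝ) * orient (PP h M ε A l) (PP h M ε A l') (PP h M ε B l'') := by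
        apply ev_pos 3 _ (fun ε => ((2^K * (B.2 - A.2) - (B.1 - A.1) : ℤ) : ℝ) * (
          M * (l' - l) * ((B.2 - A.2) + ε * (h B.1 - h A.1) + ε^3*(l''-l) - ε^4*(l''^2-l^2))
          - ((l'-l) - ε*(l'^2-l^2)) * ((B.1 - A.1) + ε^2*(h B.2 - h A.2) + ε^3 * M * (l'' - l)))) _ _ _
        · fun_prop
        · have h1 := mul_self_pos.mpr hne'
          have h2 : (0:ℝ) < (l':ℝ) - l := by
            have : (l:ℝ) < l' := by exact_mod_cast hd.2
            linarith
          have h3 := mul_pos h1 h2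
          push_cast at h3 ⊢
          simp only [hM]
          norm_num
          nlinarith
        · intro ε
          simp only [orient, PP]
          ring
      filter_upwards [this] with ε h _ using h
    · filter_upwards with ε h using absurd h hd
  have E5 : ∀ᶠ ε in 𝓝[>] (0:ℝ), ∀ A ∈ grid K, ∀ l ∈ Finset.range L,
      0 < 1/2^(K+2) - |(PP h M ε A l).1 - A.1| ∧ 0 < 1/2^(K+2) - |(PP h M ε A l).2 - A.2| := by
    simp only [Filter.eventually_all_finset]
    intro A hA l hl
    refine Filter.Eventually.and ?_ ?_
    · apply ev_pos 0 _ (fun ε => 1/2^(K+2) - |(PP h M ε A l).1 - A.1|) _ _ (by simp)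
      · unfold PP; fun_prop
      · simp [PP]
    · apply ev_pos 0 _ (fun ε => 1/2^(K+2) - |(PP h M ε A l).2 - A.2|) _ _ (by simp)
      · unfold PP; fun_prop
      · simp [PP]
  obtain ⟨ε, ⟨⟨⟨⟨⟨E1, E2a⟩, E2b⟩, E3⟩, E5⟩, hε⟩⟩ :=
    (((((E1.and E2a).and E2b).and E3).and E5).and self_mem_nhdsWithin).exists
  have hε : 0 < ε := hε
  simp only [Finset.mem_range] at *
  refine ⟨PP h M ε, E1, ?_, ?_, ?_, ?_⟩
  · intro g hg
    by_cases hg1 : g.1 = 0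
    · have hg2 : g.2 ≠ 0 := fun h2 => hg (Prod.ext hg1 h2)
      obtain ⟨e, o, ho, he⟩ := dec_two g.2 hg2
      refine ⟨fun f Z => - (bs (f+e) Z.2 * g.2), ?_, ?_⟩
      · intro f Z r hr
        have : (Z + (2^f*r) • g).2 = Z.2 + 2^(f+e) * (r*o) := by
          simp only [Prod.snd_add, Prod.smul_snd, smul_eq_mul]
          conv_lhs => rw [he]
          ring
        simp only [this, bs_flip _ _ _ (hr.mul ho)]
        ring
      · intro f X y z hX hY hZ hy hd ⟨r, hr, hz⟩ l hl l' hl' l'' hl''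
        have hX' := hX; have hY' := hY; have hZ' := hZ
        simp only [grid, Finset.mem_product] at hX' hY' hZ'
        have eY : (X + y • g).2 = X.2 + y * g.2 := by simp
        have eZ : (X + z • g).2 = X.2 + z * g.2 := by simp
        have key := HH_ne hH g.2 X.2 e o ho he f y z hX'.2 (by rw [← eY]; exact hY'.2)
          (by rw [← eZ]; exact hZ'.2) hy hd r hr hz
        rw [← eY, ← eZ] at key
        have hne : HH h X.2 (X + y • g).2 (X + z • g).2 ≠ 0 := by
          intro h0; rw [h0] at key; simp at key
        have k2 := E2b X hX _ hY _ hZ l hl l' hl' l'' hl'' ⟨by simp [hg1], by simp [hg1], hne⟩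
        have := mul_pos key k2
        have hp : 0 < HH h X.2 (X + y • g).2 (X + z • g).2 * HH h X.2 (X + y • g).2 (X + z • g).2 :=
          mul_self_pos.mpr hne
        simp only
        by_contra hcon
        push Not at hcon
        nlinarith [mul_nonneg (sub_nonneg.mpr hcon) hp.le]
    · obtain ⟨e, o, ho, he⟩ := dec_two g.1 hg1
      refine ⟨fun f Z => (bs (f+e) Z.1 * g.1), ?_, ?_⟩
      · intro f Z r hr
        have : (Z + (2^f*r) • g).1 = Z.1 + 2^(f+e) * (r*o) := by
          simp only [Prod.fst_add, Prod.smul_fst, smul_eq_mul]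
          conv_lhs => rw [he]
          ring
        simp only [this, bs_flip _ _ _ (hr.mul ho)]
        ring
      · intro f X y z hX hY hZ hy hd ⟨r, hr, hz⟩ l hl l' hl' l'' hl''
        have hX' := hX; have hY' := hY; have hZ' := hZ
        simp only [grid, Finset.mem_product] at hX' hY' hZ'
        have eY : (X + y • g).1 = X.1 + y * g.1 := by simp
        have eZ : (X + z • g).1 = X.1 + z * g.1 := by simp
        have key := HH_ne hH g.1 X.1 e o ho he f y z hX'.1 (by rw [← eY]; exact hY'.1)
          (by rw [← eZ]; exact hZ'.1) hy hd r hr hz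
        rw [← eY, ← eZ] at key
        have hne : HH h X.1 (X + y • g).1 (X + z • g).1 ≠ 0 := by
          intro h0; rw [h0] at key; simp at key
        have k2 := E2a X hX _ hY _ hZ l hl l' hl' l'' hl'' ⟨by simp [det3]; ring, hne⟩
        have := mul_pos key k2
        have hp : 0 < HH h X.1 (X + y • g).1 (X + z • g).1 * HH h X.1 (X + y • g).1 (X + z • g).1 :=
          mul_self_pos.mpr hne
        simp only
        by_contra hcon
        push Not at hcon
        nlinarith [mul_nonneg (sub_nonneg.mpr hcon) hp.le]
  · intro A hA B hB hAB l l' hll hl' l'' hl''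
    exact E3 A hA B hB l (by omega) l' hl' l'' hl'' ⟨hAB, hll⟩
  · intro A hA l l' l'' h1 h2 h3
    have c1 : (l:ℝ) < l' := by exact_mod_cast h1
    have c2 : (l':ℝ) < l'' := by exact_mod_cast h2
    have : orient (PP h M ε A l) (PP h M ε A l') (PP h M ε A l'') =
      - (ε^7 * M * ((l':ℝ) - l) * ((l'':ℝ) - l) * ((l'':ℝ) - l')) := by
      simp only [orient, PP]; ring
    rw [this]
    have d1 : 0 < (l':ℝ) - l := by linarith
    have d2 : 0 < (l'':ℝ) - l := by linarith
    have d3 : 0 < (l'':ℝ) - l' := by linarith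
    have : 0 < M := by positivity
    have : 0 < ε^7 * M * ((l':ℝ) - l) * ((l'':ℝ) - l) * ((l'':ℝ) - l') := by positivity
    linarith
  · intro A hA l hl
    have := E5 A hA l hl
    exact ⟨by linarith [this.1], by linarith [this.2]⟩
end


section
def Emp (K : ℕ) (P : ℤ × ℤ → ℕ → ℝ × ℝ) (a b c : ℝ × ℝ) : Prop := ∀ U ∈ grid K, ¬ Ins a b c (P U 0)

def Prog (K L : ℕ) (P : ℤ × ℤ → ℕ → ℝ × ℝ) (g A C : ℤ × ℤ) (σ : ℝ) : Prop :=
  ∀ t1 t2 : ℤ, t1 < t2 → A + t1 • g ∈ grid K → A + t2 • g ∈ grid K → ∀ l < L, ∀ l' < L, ∀ l'' < L,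
    0 < σ * orient (P (A + t1 • g) l) (P (A + t2 • g) l') (P C l'')

lemma mem_grid {K : ℕ} {A : ℤ × ℤ} : A ∈ grid K ↔ (0 ≤ A.1 ∧ A.1 < 2^K) ∧ (0 ≤ A.2 ∧ A.2 < 2^K) := by
  simp [grid]

lemma between_grid {K : ℕ} {A g : ℤ × ℤ} {t u t' : ℤ} (h1 : t ≤ u) (h2 : u ≤ t')
    (hA : A + t • g ∈ grid K) (hB : A + t' • g ∈ grid K) : A + u • g ∈ grid K := by
  rw [mem_grid] at *
  simp only [Prod.fst_add, Prod.smul_fst, smul_eq_mul, Prod.snd_add, Prod.smul_snd] at *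
  obtain ⟨⟨a1, a2⟩, a3, a4⟩ := hA
  obtain ⟨⟨b1, b2⟩, b3, b4⟩ := hB
  have key : ∀ x : ℤ, (t * x ≤ u * x ∧ u * x ≤ t' * x) ∨ (t' * x ≤ u * x ∧ u * x ≤ t * x) := by
    intro x
    rcases le_total 0 x with h | h
    · left; constructor <;> nlinarith
    · right; constructor <;> nlinarith
  rcases key g.1 with ⟨k1, k2⟩ | ⟨k1, k2⟩ <;> rcases key g.2 with ⟨k3, k4⟩ | ⟨k3, k4⟩ <;>
    refine ⟨⟨?_, ?_⟩, ?_, ?_⟩ <;> linarith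

variable {K L : ℕ} {P : ℤ × ℤ → ℕ → ℝ × ℝ}

lemma block {g A C : ℤ × ℤ} {σ : ℝ} (hL : 0 < L) (hp : Prog K L P g A C σ) {t u t' : ℤ} (h1 : t < u) (h2 : u < t')
    (hA : A + t • g ∈ grid K) (hB : A + t' • g ∈ grid K) {l l' l'' : ℕ} (hl : l < L) (hl' : l' < L)
    (hl'' : l'' < L) (he : Emp K P (P (A + t • g) l) (P (A + t' • g) l') (P C l'')) :
    σ * orient (P (A + t • g) l) (P (A + t' • g) l') (P (A + u • g) 0) ≤ 0 := by
  by_contra hcon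
  push Not at hcon
  have hU := between_grid h1.le h2.le hA hB
  apply he _ hU
  have k1 := hp t t' (by omega) hA hB l hl l' hl' l'' hl''
  have k2 := hp t u h1 hA hU l hl 0 hL l'' hl''
  have k3 := hp u t' h2 hU hB 0 hL l' hl' l'' hl''
  have pm : ∀ x y : ℝ, 0 < σ * x → 0 < σ * y → 0 < x * y := by
    intro x y hx hy
    have h3 := mul_pos hx hy
    have h4 : 0 < σ * σ := mul_self_pos.mpr (by rintro rfl; simp at hx)
    by_contra hcon
    push Not at hcon
    nlinarith
  refine ⟨pm _ _ k1 hcon, ?_, ?_⟩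
  · rw [orient_rot (P (A + u • g) 0) (P (A + t' • g) l') (P C l'')]
    exact pm _ _ k1 k3
  · rw [← orient_rot (P C l'') (P (A + t • g) l) (P (A + u • g) 0)]
    exact pm _ _ k1 k2

lemma ruleX (hG : Good K L P) {g : ℤ × ℤ} (hg : g ≠ 0) (A : ℤ × ℤ) : ∃ β : ℕ → ℤ → ℝ,
    (∀ (f : ℕ) (t t' r : ℤ), Odd r → t' - t = 2^f*r → β f t' = - β f t) ∧
    ∀ (f : ℕ) (t1 t2 t3 : ℤ), A + t1 • g ∈ grid K → A + t2 • g ∈ grid K → A + t3 • g ∈ grid K →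
      t1 < t2 → (2:ℤ)^(f+1) ∣ t2 - t1 → (∃ r, Odd r ∧ t3 - t1 = 2^f*r) → ∀ l < L, ∀ l' < L, ∀ l'' < L,
      0 < β f t3 * orient (P (A + t1 • g) l) (P (A + t2 • g) l') (P (A + t3 • g) l'') := by
  obtain ⟨β, hf, hb⟩ := hG.f2 g hg
  refine ⟨fun f t => β f (A + t • g), ?_, ?_⟩
  · intro f t t' r hr h
    have : A + t' • g = (A + t • g) + (2^f*r) • g := by
      rw [show t' = t + 2^f*r by linarith]; module
    simp only [this, hf f _ r hr]
  · intro f t1 t2 t3 h1 h2 h3 h12 hd hr l hl l' hl' l'' hl''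
    have e2 : A + t2 • g = (A + t1 • g) + (t2 - t1) • g := by module
    have e3 : A + t3 • g = (A + t1 • g) + (t3 - t1) • g := by module
    have := hb f (A + t1 • g) (t2 - t1) (t3 - t1) h1 (e2 ▸ h2) (e3 ▸ h3) (by omega) hd hr l hl l' hl' l'' hl''
    rw [← e2, ← e3] at this
    have hpos : (0:ℝ) < ((t2 - t1 : ℤ) : ℝ) := by
      have : 0 < t2 - t1 := by omega
      exact_mod_cast this
    by_contra hcon
    push Not at hcon
    nlinarith

lemma sign_contra {σ b p p' : ℝ} (hs : σ ≠ 0) (h1 : σ * p ≤ 0) (h2 : σ * p' ≤ 0) (h3 : 0 < b * p)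
    (h4 : 0 < -b * p') : False := by
  have a1 := mul_nonneg_of_nonpos_of_nonpos h1 h2
  have a2 := mul_pos h3 h4
  have a3 : 0 < σ * σ := mul_self_pos.mpr hs
  have a4 : 0 < b * b := mul_self_pos.mpr (by rintro rfl; simp at h3)
  have : p * p' < 0 := by
    by_contra h
    push Not at h
    nlinarith [mul_nonneg a4.le h]
  nlinarith [mul_pos a3 (neg_pos.mpr this)]

lemma prog_ne {g A C : ℤ × ℤ} {σ : ℝ} (hL : 0 < L) (hp : Prog K L P g A C σ) {t t' : ℤ} (h1 : t < t')
    (hA : A + t • g ∈ grid K) (hB : A + t' • g ∈ grid K) : σ ≠ 0 := by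
  rintro rfl
  have := hp t t' h1 hA hB 0 hL 0 hL 0 hL
  simp at this

lemma pow_two_len (hG : Good K L P) {g A C : ℤ × ℤ} {σ : ℝ} (hg : g ≠ 0) (hL : 0 < L)
    (hp : Prog K L P g A C σ) {t t' : ℤ} (h1 : t < t')
    (hA : A + t • g ∈ grid K) (hB : A + t' • g ∈ grid K) {l l' l'' : ℕ} (hl : l < L) (hl' : l' < L)
    (hl'' : l'' < L) (he : Emp K P (P (A + t • g) l) (P (A + t' • g) l') (P C l'')) :
    ∃ w : ℕ, t' - t = 2^w := by
  obtain ⟨β, hf, hb⟩ := ruleX hG hg A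
  obtain ⟨w, o, ho, e⟩ := dec_two (t' - t) (by omega)
  refine ⟨w, ?_⟩
  by_contra hne
  have h2w : (0:ℤ) < 2^w := by positivity
  have hopos : 0 < o := by
    by_contra h; push Not at h; nlinarith
  have ho1 : o ≠ 1 := by rintro rfl; apply hne; rw [e]; ring
  have ho3 : 3 ≤ o := by obtain ⟨k, rfl⟩ := ho; omega
  have hU : t < t + 2^w ∧ t + 2^w < t' := ⟨by linarith, by nlinarith⟩
  have hU' : t < t' - 2^w ∧ t' - 2^w < t' := ⟨by nlinarith, by linarith⟩
  have gU := between_grid hU.1.le hU.2.le hA hB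
  have gU' := between_grid hU'.1.le hU'.2.le hA hB
  have b1 := block hL hp hU.1 hU.2 hA hB hl hl' hl'' he
  have b2 := block hL hp hU'.1 hU'.2 hA hB hl hl' hl'' he
  have hdv : (2:ℤ)^(w+1) ∣ 2^w*(o-1) := by
    rw [pow_succ]; apply mul_dvd_mul_left
    obtain ⟨k, rfl⟩ := ho; exact ⟨k, by ring⟩
  have r1 := hb w (t + 2^w) t' t gU hB hA hU.2 (by convert hdv using 1; linarith) ⟨-1, by decide, by ring⟩
    0 hL l' hl' l hl
  have r2 := hb w t (t' - 2^w) t' hA gU' hB hU'.1 (by convert hdv using 1; linarith) ⟨o, ho, e⟩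
    l hl 0 hL l' hl'
  rw [hf w t t' o ho e] at r2
  refine sign_contra (prog_ne hL hp h1 hA hB) b2 b1 (b := β w t) ?_ ?_
  · convert r2 using 1; simp only [orient]; ring
  · convert r1 using 1; simp only [orient]; ring

lemma core (hG : Good K L P) {g A C : ℤ × ℤ} {σ : ℝ} (hg : g ≠ 0) (hL : 0 < L)
    (hp : Prog K L P g A C σ) {t t' : ℤ} {w : ℕ} (h1 : t < t') (hne : t' ≠ t + 2^w)
    (hA : A + t • g ∈ grid K) (hB : A + (t + 2^w) • g ∈ grid K)
    (hA' : A + t' • g ∈ grid K) (hB' : A + (t' + 2^w) • g ∈ grid K)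
    {l l' l'' : ℕ} (hl : l < L) (hl' : l' < L)
    (hl'' : l'' < L) (he : Emp K P (P (A + t • g) l) (P (A + (t + 2^w) • g) l') (P C l''))
    (he' : Emp K P (P (A + t' • g) l) (P (A + (t' + 2^w) • g) l') (P C l'')) (q : ℝ × ℝ)
    (hq : Cl (P (A + t • g) l) (P (A + (t + 2^w) • g) l') (P C l'') q)
    (hq' : Cl (P (A + t' • g) l) (P (A + (t' + 2^w) • g) l') (P C l'') q) (hqc : q ≠ P C l'') : False := by
  have h2w : (0:ℤ) < 2^w := by positivity
  rcases lt_or_gt_of_ne hne with h | h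
  · obtain ⟨β, hf, hb⟩ := ruleX hG hg A
    obtain ⟨f, o, ho, e⟩ := dec_two (t' - t) (by omega)
    have h2f : (0:ℤ) < 2^f := by positivity
    have hopos : 0 < o := by
      by_contra h; push Not at h; nlinarith
    have hfw : f < w := by
      by_contra hcon; push Not at hcon
      have : (2:ℤ)^w ≤ 2^f := pow_le_pow_right₀ (by norm_num) hcon
      nlinarith
    have hdv : (2:ℤ)^(f+1) ∣ 2^w := pow_dvd_pow _ hfw
    have b1 := block hL hp h1 h hA hB hl hl' hl'' he
    have b2 := block hL hp h (by linarith : t + 2^w < t' + 2^w) hA' hB' hl hl' hl'' he'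
    have r1 := hb f t (t + 2^w) t' hA hB hA' (by linarith) (by simpa using hdv) ⟨o, ho, e⟩
      l hl l' hl' 0 hL
    have hodd : Odd ((2:ℤ)^(w-f) - o) := by
      apply Even.sub_odd _ ho
      exact (Int.even_pow.mpr ⟨by decide, by omega⟩)
    have e2 : t + 2^w - t' = 2^f * ((2:ℤ)^(w-f) - o) := by
      rw [mul_sub, ← pow_add, show f + (w - f) = w by omega]; linarith
    have r2 := hb f t' (t' + 2^w) (t + 2^w) hA' hB' hB (by linarith) (by simpa using hdv)
      ⟨_, hodd, e2⟩ l hl l' hl' 0 hL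
    rw [hf f t' (t+2^w) _ hodd e2] at r2
    exact sign_contra (prog_ne hL hp h1 hA hA') b1 b2 r1 r2
  · have k1 := hp t (t + 2^w) (by linarith) hA hB l hl l' hl' l'' hl''
    have k2 := hp t' (t' + 2^w) (by linarith) hA' hB' l hl l' hl' l'' hl''
    refine cone_lemma (σ := σ) ?_ ?_ hq hq' hqc
      (hp t t' h1 hA hA' l hl l hl l'' hl'') (hp t (t' + 2^w) (by linarith) hA hB' l hl l' hl' l'' hl'')
      (hp (t + 2^w) t' h hB hA' l' hl' l hl l'' hl'')
      (hp (t + 2^w) (t' + 2^w) (by linarith) hB hB' l' hl' l' hl' l'' hl'')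
    · intro h0; rw [h0] at k1; simp at k1
    · intro h0; rw [h0] at k2; simp at k2

/-! lattice -/
def dt (g c : ℤ × ℤ) : ℤ := g.1 * c.2 - g.2 * c.1

lemma prim (D : ℤ × ℤ) (hD : D ≠ 0) : ∃ d : ℤ, 0 < d ∧ ∃ g : ℤ × ℤ, D = d • g ∧ IsCoprime g.1 g.2 := by
  have h0 : 0 < Int.gcd D.1 D.2 := by
    rw [Nat.pos_iff_ne_zero]
    intro h
    rw [Int.gcd_eq_zero_iff] at h
    exact hD (Prod.ext h.1 h.2)
  obtain ⟨a, b, hc, ha, hb⟩ := Int.exists_gcd_one h0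
  refine ⟨Int.gcd D.1 D.2, by exact_mod_cast h0, (a, b), ?_, ?_⟩
  · ext
    · simp; linarith
    · simp; linarith
  · exact Int.isCoprime_iff_gcd_eq_one.mpr hc

lemma par {g c : ℤ × ℤ} (hg : IsCoprime g.1 g.2) (h : dt g c = 0) : ∃ m : ℤ, c = m • g := by
  obtain ⟨u, v, e⟩ := hg
  unfold dt at h
  refine ⟨u * c.1 + v * c.2, ?_⟩
  ext
  · simp; linear_combination (-c.1) * e - v * h
  · simp; linear_combination (-c.2) * e + u * h

def TypOff (A B C : ℤ × ℤ) : Prop := ∃ g : ℤ × ℤ, IsCoprime g.1 g.2 ∧ ∃ n : ℤ, 0 < n ∧ B = A + n • g ∧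
  dt g (C - A) ≠ 0 ∧ |dt g (C - A)| ≤ 2

def TypOn (A B C : ℤ × ℤ) : Prop := ∃ g : ℤ × ℤ, IsCoprime g.1 g.2 ∧ ∃ (v : ℕ) (n r : ℤ), 0 < n ∧ Odd r ∧
  B = A + (2^(v+1)*n) • g ∧ C = A + (2^v*r) • g

lemma inside_grid {A B C U : ℤ × ℤ} (hA : A ∈ grid K) (hB : B ∈ grid K) (hC : C ∈ grid K)
    (h1 : 0 < det3 A B U) (h2 : 0 < det3 B C U) (h3 : 0 < det3 C A U) : U ∈ grid K := by
  rw [mem_grid] at *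
  have e1 : (det3 A B U + det3 B C U + det3 C A U) * U.1 = det3 B C U * A.1 + det3 C A U * B.1 + det3 A B U * C.1 := by
    simp only [det3]; ring
  have e2 : (det3 A B U + det3 B C U + det3 C A U) * U.2 = det3 B C U * A.2 + det3 C A U * B.2 + det3 A B U * C.2 := by
    simp only [det3]; ring
  obtain ⟨⟨a1, a2⟩, a3, a4⟩ := hA
  obtain ⟨⟨b1, b2⟩, b3, b4⟩ := hB
  obtain ⟨⟨c1, c2⟩, c3, c4⟩ := hC
  generalize det3 A B U = x at *
  generalize det3 B C U = y at *
  generalize det3 C A U = z at *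
  have hs : 0 < x + y + z := by linarith
  refine ⟨⟨?_, ?_⟩, ?_, ?_⟩
  · by_contra h; push Not at h; nlinarith [mul_nonneg h2.le a1, mul_nonneg h3.le b1, mul_nonneg h1.le c1]
  · by_contra h; push Not at h; nlinarith [mul_pos h2 (sub_pos.mpr a2), mul_pos h3 (sub_pos.mpr b2), mul_pos h1 (sub_pos.mpr c2)]
  · by_contra h; push Not at h; nlinarith [mul_nonneg h2.le a3, mul_nonneg h3.le b3, mul_nonneg h1.le c3]
  · by_contra h; push Not at h; nlinarith [mul_pos h2 (sub_pos.mpr a4), mul_pos h3 (sub_pos.mpr b4), mul_pos h1 (sub_pos.mpr c4)]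

lemma lattice_tri {A B C : ℤ × ℤ} (hD : 0 < det3 A B C)
    (hno : ∀ U, ¬ (0 < det3 A B U ∧ 0 < det3 B C U ∧ 0 < det3 C A U)) :
    TypOff A B C ∨ TypOff A C B ∨ TypOff B C A := by
  obtain ⟨n, hn, g, hBg, hcop⟩ := prim (B - A) (by
    intro h
    have : B = A := by rw [← sub_eq_zero]; exact h
    subst this; simp [det3] at hD)
  have hB : B = A + n • g := by rw [← hBg]; abel
  set d := dt g (C - A) with hd
  have hnd : det3 A B C = n * d := by
    rw [hB, hd]; simp [det3, dt]; ring
  have hd0 : 0 < d := by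
    rw [hnd] at hD; exact (pos_iff_pos_of_mul_pos hD).mp hn
  by_cases hd2 : d ≤ 2
  · left; exact ⟨g, hcop, n, hn, hB, by rw [← hd]; omega, by rw [← hd, abs_of_pos hd0]; exact hd2⟩
  push Not at hd2
  obtain ⟨u, v, e⟩ := id hcop
  set c0 := u * (C - A).1 + v * (C - A).2 with hc0
  set c := c0 % d with hc
  set k := c0 / d with hk
  have hck : c0 = d * k + c := (Int.mul_ediv_add_emod c0 d).symm
  have hcpos : 0 ≤ c := Int.emod_nonneg _ (by omega)
  have hcd : c < d := Int.emod_lt_of_pos _ hd0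
  set g' : ℤ × ℤ := (-v, u) + k • g with hg'
  have hgg : dt g g' = 1 := by
    simp only [hg', dt, Prod.fst_add, Prod.snd_add, Prod.smul_fst, Prod.smul_snd, smul_eq_mul]
    linear_combination e
  have hC : C = A + c • g + d • g' := by
    have h1 : C - A = c0 • g + d • ((-v, u) : ℤ × ℤ) := by
      ext
      · simp only [hc0, hd, dt, Prod.fst_add, Prod.smul_fst, smul_eq_mul]
        linear_combination (-(C-A).1) * e
      · simp only [hc0, hd, dt, Prod.snd_add, Prod.smul_snd, smul_eq_mul]
        linear_combination (-(C-A).2) * e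
    rw [hck] at h1
    rw [hg']
    calc C = A + (C - A) := by abel
      _ = _ := by rw [h1]; module
  have hcop' : IsCoprime g'.1 g'.2 := ⟨-g.2, g.1, by unfold dt at hgg; linarith⟩
  clear_value g' c
  by_cases hcase : 2 ≤ n ∨ 2 ≤ c
  · exfalso
    apply hno (A + g + g')
    have x1 : det3 A B (A + g + g') = n * dt g g' := by
      rw [hB]; simp [det3, dt]; ring
    have x2 : det3 B C (A + g + g') = ((n-1)*(d-1) + c - 1) * dt g g' := by
      rw [hB, hC]; simp only [det3, dt, Prod.fst_add, Prod.snd_add, Prod.smul_fst, Prod.smul_snd, smul_eq_mul]; ring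
    have x3 : det3 C A (A + g + g') = (d - c) * dt g g' := by
      rw [hC]; simp only [det3, dt, Prod.fst_add, Prod.snd_add, Prod.smul_fst, Prod.smul_snd, smul_eq_mul]; ring
    rw [x1, x2, x3, hgg]
    refine ⟨by linarith, ?_, by linarith⟩
    rcases hcase with h | h
    · nlinarith
    · nlinarith
  · push Not at hcase
    have hn1 : n = 1 := by omega
    subst hn1
    right
    have hc01 : c = 0 ∨ c = 1 := by omega
    have hgg' : g.1 * g'.2 - g.2 * g'.1 = 1 := hgg
    rcases hc01 with h | h
    · left
      refine ⟨g', hcop', d, hd0, by rw [hC, h]; module, ?_⟩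
      have : dt g' (B - A) = -1 := by rw [hB]; simp [dt]; linarith
      rw [this]; norm_num
    · right
      refine ⟨g', hcop', d, hd0, by rw [hC, h, hB], ?_⟩
      have : dt g' (A - B) = 1 := by rw [hB]; simp [dt]; linarith
      rw [this]; norm_num

lemma typOn_of {O g X Y Z : ℤ × ℤ} (hcop : IsCoprime g.1 g.2) {x y z : ℤ} (hX : X = O + x • g)
    (hY : Y = O + y • g) (hZ : Z = O + z • g) (hxy : x ≠ y) {f : ℕ} (hd : (2:ℤ)^(f+1) ∣ y - x)
    {r : ℤ} (hr : Odd r) (hz : z - x = 2^f*r) : TypOn X Y Z ∨ TypOn Y X Z := by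
  obtain ⟨n, hn⟩ := hd
  have h2 : (0:ℤ) < 2^(f+1) := by positivity
  rcases lt_trichotomy n 0 with h | h | h
  · right
    refine ⟨g, hcop, f, -n, r - 2*n, by omega, ?_, ?_, ?_⟩
    · obtain ⟨k, rfl⟩ := hr; exact ⟨k - n, by ring⟩
    · rw [hX, hY, show y = x + 2^(f+1)*n by linarith]; module
    · rw [hZ, hY, show y = x + 2^(f+1)*n by linarith, show z = x + 2^f*r by linarith, pow_succ]; module
  · subst h; exfalso; apply hxy; linarith
  · left
    refine ⟨g, hcop, f, n, r, h, hr, ?_, ?_⟩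
    · rw [hX, hY, show y = x + 2^(f+1)*n by linarith]; module
    · rw [hZ, hX, show z = x + 2^f*r by linarith]; module

lemma collinear_typ {A B C : ℤ × ℤ} (h1 : A ≠ B) (h2 : A ≠ C) (h3 : B ≠ C) (hd : det3 A B C = 0) :
    (TypOn A B C ∨ TypOn B A C) ∨ (TypOn A C B ∨ TypOn C A B) ∨ (TypOn B C A ∨ TypOn C B A) := by
  obtain ⟨n, hn, g, hBg, hcop⟩ := prim (B - A) (by
    intro h; apply h1; symm; rw [← sub_eq_zero]; exact h)
  have hB : B = A + n • g := by rw [← hBg]; abel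
  obtain ⟨m, hm⟩ := par (g := g) (c := C - A) hcop (by
    have : n * dt g (C - A) = 0 := by
      rw [← hd, hB]; simp [det3, dt]; ring
    rcases mul_eq_zero.mp this with h | h
    · omega
    · exact h)
  have hC : C = A + m • g := by rw [← hm]; abel
  have hA : A = A + (0:ℤ) • g := by module
  have k2 : (0:ℤ) ≠ m := by rintro rfl; exact h2 (by rw [hC]; module)
  have k3 : n ≠ m := by rintro rfl; exact h3 (by rw [hC, hB])
  obtain ⟨f, ⟨hd, r, hr, e⟩ | ⟨hd, r, hr, e⟩ | ⟨hd, r, hr, e⟩⟩ := val_triple 0 n m (by omega) k2 k3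
  · left; exact typOn_of hcop hA hB hC (by omega) hd hr e
  · right; left; exact typOn_of hcop hA hC hB (by omega) hd hr e
  · right; right; exact typOn_of hcop hB hC hA (by omega) hd hr e
end


section
variable {K L : ℕ} {P : ℤ × ℤ → ℕ → ℝ × ℝ}

lemma f1_neg (hG : Good K L P) {A B C : ℤ × ℤ} (hA : A ∈ grid K) (hB : B ∈ grid K) (hC : C ∈ grid K)
    {l l' l'' : ℕ} (hl : l < L) (hl' : l' < L) (hl'' : l'' < L) (h : det3 A B C < 0) :
    orient (P A l) (P B l') (P C l'') < 0 := by
  have := hG.f1 B hB A hA C hC l' hl' l hl l'' hl'' (by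
    have : det3 B A C = - det3 A B C := by simp only [det3]; ring
    omega)
  rw [orient_swap] at this
  linarith

lemma prog_off (hG : Good K L P) {g A C : ℤ × ℤ} (hC : C ∈ grid K) (h : dt g (C - A) ≠ 0) :
    ∃ σ, Prog K L P g A C σ := by
  have e : ∀ t1 t2 : ℤ, det3 (A + t1 • g) (A + t2 • g) C = (t2 - t1) * dt g (C - A) := by
    intro t1 t2; simp [det3, dt]; ring
  rcases lt_or_gt_of_ne h with h | h
  · refine ⟨-1, fun t1 t2 ht h1 h2 l hl l' hl' l'' hl'' => ?_⟩
    have := f1_neg hG h1 h2 hC hl hl' hl'' (by rw [e]; exact mul_neg_of_pos_of_neg (by omega) h)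
    linarith
  · refine ⟨1, fun t1 t2 ht h1 h2 l hl l' hl' l'' hl'' => ?_⟩
    have := hG.f1 _ h1 _ h2 _ hC l hl l' hl' l'' hl'' (by rw [e]; exact mul_pos (by omega) h)
    linarith

lemma prog_on (hG : Good K L P) {g A C : ℤ × ℤ} (hg : g ≠ 0) (hC : C ∈ grid K) {v : ℕ} {r : ℤ} (hr : Odd r)
    (h : C = A + (2^v*r) • g) :
    ∃ σ, Prog K L P ((2^(v+1) : ℤ) • g) A C σ := by
  obtain ⟨β, -, hb⟩ := hG.f2 g hg
  refine ⟨β v C, fun t1 t2 ht h1 h2 l hl l' hl' l'' hl'' => ?_⟩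
  have e3 : C = (A + t1 • (2^(v+1) : ℤ) • g) + (2^v*(r - 2*t1)) • g := by
    rw [h, pow_succ]; module
  have e2 : A + t2 • (2^(v+1) : ℤ) • g = (A + t1 • (2^(v+1) : ℤ) • g) + (2^(v+1)*(t2-t1)) • g := by
    rw [pow_succ]; module
  have hp : (0:ℤ) < 2^(v+1)*(t2-t1) := mul_pos (by positivity) (by omega)
  have := hb v (A + t1 • (2^(v+1) : ℤ) • g) (2^(v+1)*(t2-t1)) (2^v*(r - 2*t1)) h1 (e2 ▸ h2) (e3 ▸ hC) hp.ne'
    (dvd_mul_right _ _) ⟨r - 2*t1, by obtain ⟨k, rfl⟩ := hr; exact ⟨k - t1, by ring⟩, rfl⟩ l hl l' hl' l'' hl''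
  rw [← e2, ← e3] at this
  have hp' : (0:ℝ) < ((2^(v+1)*(t2-t1) : ℤ) : ℝ) := by exact_mod_cast hp
  by_contra hc
  push Not at hc
  nlinarith

/-- sign of a triple is independent of the labels -/
def Sgn (L : ℕ) (P : ℤ × ℤ → ℕ → ℝ × ℝ) (A B C : ℤ × ℤ) : Prop :=
  ∃ σ : ℝ, ∀ l < L, ∀ l' < L, ∀ l'' < L, 0 < σ * orient (P A l) (P B l') (P C l'')

lemma Sgn.rot {A B C : ℤ × ℤ} (h : Sgn L P A B C) : Sgn L P B C A := by
  obtain ⟨σ, h⟩ := h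
  exact ⟨σ, fun l hl l' hl' l'' hl'' => by rw [orient_rot]; exact h l'' hl'' l hl l' hl'⟩

lemma Sgn.swap {A B C : ℤ × ℤ} (h : Sgn L P A B C) : Sgn L P B A C := by
  obtain ⟨σ, h⟩ := h
  exact ⟨-σ, fun l hl l' hl' l'' hl'' => by rw [orient_swap, neg_mul_neg]; exact h l' hl' l hl l'' hl''⟩

lemma sgn_prog {g A C : ℤ × ℤ} {σ : ℝ} (hp : Prog K L P g A C σ) {n : ℤ} (hn : 0 < n) (hA : A ∈ grid K)
    (hB : A + n • g ∈ grid K) : Sgn L P A (A + n • g) C := by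
  refine ⟨σ, fun l hl l' hl' l'' hl'' => ?_⟩
  have e : A + (0:ℤ) • g = A := by module
  have := hp 0 n hn (by rwa [e]) hB l hl l' hl' l'' hl''
  rwa [e] at this

lemma cop_ne {g : ℤ × ℤ} (h : IsCoprime g.1 g.2) : g ≠ 0 := by
  rintro rfl
  obtain ⟨u, v, e⟩ := h
  simp at e

lemma sgn_on (hG : Good K L P) {A B C : ℤ × ℤ} (hA : A ∈ grid K) (hB : B ∈ grid K) (hC : C ∈ grid K)
    (h : TypOn A B C) : Sgn L P A B C := by
  obtain ⟨g, hcop, v, n, r, hn, hr, rfl, hc⟩ := h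
  obtain ⟨σ, hp⟩ := prog_on hG (cop_ne hcop) hC hr hc
  have e : A + (2^(v+1)*n) • g = A + n • (2^(v+1) : ℤ) • g := by module
  rw [e] at hB ⊢
  exact sgn_prog hp hn hA hB

lemma sgn (hG : Good K L P) {A B C : ℤ × ℤ} (hA : A ∈ grid K) (hB : B ∈ grid K) (hC : C ∈ grid K)
    (h1 : A ≠ B) (h2 : A ≠ C) (h3 : B ≠ C) : Sgn L P A B C := by
  rcases lt_trichotomy (det3 A B C) 0 with h | h | h
  · exact ⟨-1, fun l hl l' hl' l'' hl'' => by have := f1_neg hG hA hB hC hl hl' hl'' h; linarith⟩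
  · rcases collinear_typ h1 h2 h3 h with (h | h) | (h | h) | (h | h)
    · exact sgn_on hG hA hB hC h
    · exact (sgn_on hG hB hA hC h).swap
    · exact (sgn_on hG hA hC hB h).swap.rot
    · exact (sgn_on hG hC hA hB h).rot
    · exact (sgn_on hG hB hC hA h).rot.rot
    · exact (sgn_on hG hC hB hA h).swap.rot.rot
  · exact ⟨1, fun l hl l' hl' l'' hl'' => by have := hG.f1 A hA B hB C hC l hl l' hl' l'' hl'' h; linarith⟩

lemma Sgn.ne {A B C : ℤ × ℤ} (h : Sgn L P A B C) {l l' l'' : ℕ} (hl : l < L) (hl' : l' < L) (hl'' : l'' < L) :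
    orient (P A l) (P B l') (P C l'') ≠ 0 := by
  obtain ⟨σ, h⟩ := h
  have := h l hl l' hl' l'' hl''
  intro h0; rw [h0] at this; simp at this

lemma P_ne (hG : Good K L P) {A B : ℤ × ℤ} (hA : A ∈ grid K) (hB : B ∈ grid K) (h : A ≠ B) {l l' : ℕ}
    (hl : l < L) (hl' : l' < L) : P A l ≠ P B l' := by
  intro he
  obtain ⟨a1, a2⟩ := hG.f5 A hA l hl
  obtain ⟨b1, b2⟩ := hG.f5 B hB l' hl'
  rw [he] at a1 a2
  have hK : (1:ℝ)/2^(K+2) ≤ 1/4 := by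
    apply one_div_le_one_div_of_le (by norm_num)
    have : (1:ℝ) ≤ 2^K := one_le_pow₀ (by norm_num)
    rw [pow_add]; linarith
  rw [abs_le] at *
  apply h
  have k : ∀ x y : ℤ, (x:ℝ) - y ≤ 1/2 → (y:ℝ) - x ≤ 1/2 → x = y := by
    intro x y h1 h2
    have h1 : (x:ℝ) < y + 1 := by linarith
    have h2 : (y:ℝ) < x + 1 := by linarith
    have h1 : x < y + 1 := by exact_mod_cast h1
    have h2 : y < x + 1 := by exact_mod_cast h2
    omega
  ext
  · apply k <;> linarith
  · apply k <;> linarith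

lemma fiber_two (hG : Good K L P) (hL : 0 < L) {g C : ℤ × ℤ} (hg : g ≠ 0) (w : ℕ) {l1 l2 l3 : ℕ} (h1 : l1 < L)
    (h2 : l2 < L) (h3 : l3 < L) (q : ℝ × ℝ) (hq : q ≠ P C l3) (F : Finset (ℤ × ℤ))
    (hF : ∀ A ∈ F, A ∈ grid K ∧ A + (2^w : ℤ) • g ∈ grid K ∧ (∃ σ, Prog K L P g A C σ) ∧
      Emp K P (P A l1) (P (A + (2^w : ℤ) • g) l2) (P C l3) ∧ Cl (P A l1) (P (A + (2^w : ℤ) • g) l2) (P C l3) q)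
    (hd : ∀ A ∈ F, ∀ A' ∈ F, ∃ t : ℤ, A' = A + t • g) : F.card ≤ 2 := by
  have key : ∀ A ∈ F, ∀ A' ∈ F, ∀ t : ℤ, A' = A + t • g → 0 < t → t = 2^w := by
    intro A hA A' hA' t ht h0
    by_contra hne
    obtain ⟨a1, a2, ⟨σ, hp⟩, a4, a5⟩ := hF A hA
    obtain ⟨b1, b2, -, b4, b5⟩ := hF A' hA'
    have e : A + (0:ℤ) • g = A := by module
    have e1 : A + (0 + 2^w : ℤ) • g = A + (2^w:ℤ) • g := by module
    have e2 : A + (t + 2^w : ℤ) • g = A' + (2^w:ℤ) • g := by rw [ht]; module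
    refine core (t := 0) (t' := t) (w := w) hG hg hL hp h0 (by omega) (by rwa [e]) (by rwa [e1]) (by rwa [← ht])
      (by rwa [e2]) h1 h2 h3 (by rwa [e, e1]) (by rwa [e2, ← ht]) q (by rwa [e, e1]) (by rwa [e2, ← ht]) hq
  have key2 : ∀ A ∈ F, ∀ A' ∈ F, A ≠ A' → ∃ t : ℤ, A' = A + t • g ∧ (t = 2^w ∨ t = -2^w) := by
    intro A hA A' hA' hne
    obtain ⟨t, ht⟩ := hd A hA A' hA'
    refine ⟨t, ht, ?_⟩
    rcases lt_trichotomy t 0 with h | h | h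
    · right
      have := key A' hA' A hA (-t) (by rw [ht]; module) (by omega)
      omega
    · subst h; exact absurd (by rw [ht]; module) hne
    · left; exact key A hA A' hA' t ht h
  by_contra hcon
  push Not at hcon
  rw [Finset.two_lt_card] at hcon
  obtain ⟨a, ha, b, hb, c, hc, hab, hac, hbc⟩ := hcon
  obtain ⟨t, ht, ht'⟩ := key2 a ha b hb hab
  obtain ⟨s, hs, hs'⟩ := key2 a ha c hc hac
  have hw : (0:ℤ) < 2^w := by positivity
  have hne : t ≠ s := by rintro rfl; exact hbc (by rw [ht, hs])
  rcases lt_or_gt_of_ne hne with h | h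
  · have := key b hb c hc (s - t) (by rw [ht, hs]; module) (by omega)
    omega
  · have := key c hc b hb (t - s) (by rw [ht, hs]; module) (by omega)
    omega

lemma sum_bound (K : ℕ) : (∑ j ∈ Finset.range K, 4^j * 2^(K-j) * (K-j)^2) + 2^K*(K^2+4*K+6) ≤ 6 * 4^K := by
  induction K with
  | zero => simp
  | succ K ih =>
    rw [Finset.sum_range_succ']
    have : ∑ k ∈ Finset.range K, 4 ^ (k + 1) * 2 ^ (K + 1 - (k + 1)) * (K + 1 - (k + 1)) ^ 2
        = 4 * ∑ j ∈ Finset.range K, 4^j * 2^(K-j) * (K-j)^2 := by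
      rw [Finset.mul_sum]
      apply Finset.sum_congr rfl
      intro k _
      rw [Nat.add_sub_add_right]; ring
    rw [this]
    simp only [pow_zero, Nat.sub_zero, one_mul]
    have e : (4:ℕ)^(K+1) = 4*4^K := by ring
    have e2 : (2:ℕ)^(K+1) = 2*2^K := by ring
    rw [e, e2]
    have h2 : (0:ℕ) < 2^K := by positivity
    nlinarith

def Box (j : ℕ) : Finset (ℤ × ℤ) :=
  (Finset.Ioo (-(2:ℤ)^(j+1)) (2^(j+1)) ×ˢ Finset.Ioo (-(2:ℤ)^(j+1)) (2^(j+1))).filter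
    (fun g => IsCoprime g.1 g.2 ∧ (2^j ≤ |g.1| ∨ 2^j ≤ |g.2|))

lemma card_Box (j : ℕ) : (Box j).card ≤ 16 * 4^j := by
  refine (Finset.card_filter_le _ _).trans ?_
  rw [Finset.card_product, Int.card_Ioo]
  have h : ((2:ℤ)^(j+1) - -2^(j+1) - 1).toNat ≤ 4 * 2^j := by
    rw [Int.toNat_le]; push_cast; rw [pow_succ]; linarith
  calc _ ≤ (4 * 2^j) * (4*2^j) := Nat.mul_le_mul h h
    _ = 16 * 4^j := by
      rw [show (4:ℕ)^j = 2^j*2^j by rw [← mul_pow]; norm_num]; ring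

lemma mem_Box {g : ℤ × ℤ} (hc : IsCoprime g.1 g.2) (h1 : |g.1| < 2^K) (h2 : |g.2| < 2^K) :
    ∃ j < K, g ∈ Box j := by
  have hm : max g.1.natAbs g.2.natAbs ≠ 0 := by
    intro h
    have a : g.1 = 0 := by omega
    have b : g.2 = 0 := by omega
    exact cop_ne hc (Prod.ext a b)
  have k1 := Nat.pow_log_le_self 2 hm
  have k2 := Nat.lt_pow_succ_log_self (b := 2) (by norm_num) (max g.1.natAbs g.2.natAbs)
  set j := Nat.log 2 (max g.1.natAbs g.2.natAbs)
  have k1' : (2:ℤ)^j ≤ max |g.1| |g.2| := by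
    rw [Int.abs_eq_natAbs, Int.abs_eq_natAbs]; exact_mod_cast k1
  have k2' : max |g.1| |g.2| < (2:ℤ)^(j+1) := by
    rw [Int.abs_eq_natAbs, Int.abs_eq_natAbs]; exact_mod_cast k2
  refine ⟨j, ?_, ?_⟩
  · have : (2:ℤ)^j < 2^K := lt_of_le_of_lt k1' (max_lt h1 h2)
    exact (pow_lt_pow_iff_right₀ (by norm_num)).mp this
  · rw [Box, Finset.mem_filter, Finset.mem_product, Finset.mem_Ioo, Finset.mem_Ioo]
    rw [max_lt_iff, abs_lt, abs_lt] at k2'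
    exact ⟨k2', hc, le_max_iff.mp k1'⟩

def Near (K : ℕ) (q : ℝ × ℝ) (g : ℤ × ℤ) : Finset (ℤ × ℤ) :=
  (grid K).filter (fun C => |(dt g C : ℝ) - (g.1 * q.2 - g.2 * q.1)| ≤ 3)

lemma card_line {j : ℕ} (hj : j < K) {g : ℤ × ℤ} (hg : g ∈ Box j) (s : ℤ) :
    ((grid K).filter (fun C => dt g C = s)).card ≤ 2^(K-j) := by
  rw [Box, Finset.mem_filter] at hg
  obtain ⟨-, hc, hg⟩ := hg
  have h2j : (0:ℤ) < 2^j := by positivity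
  have hcard : (Finset.Ico (0:ℤ) (2^(K-j))).card = 2^(K-j) := by
    rw [Int.card_Ico, sub_zero, show ((2:ℤ)^(K-j)) = ((2^(K-j) : ℕ):ℤ) by push_cast; rfl, Int.toNat_natCast]
  have sep : ∀ x y t a : ℤ, t ≠ 0 → 2^j ≤ |a| → y = x + t * a → x / 2^j = y / 2^j → False := by
    intro x y t a ht ha hy he
    have h3 : (2:ℤ)^j ≤ |t * a| := by
      rw [abs_mul]
      have : 1 ≤ |t| := Int.one_le_abs ht
      nlinarith
    have e1 := Int.mul_ediv_add_emod x (2^j)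
    have e2 := Int.mul_ediv_add_emod y (2^j)
    rw [he] at e1
    have b1 := Int.emod_nonneg x h2j.ne'
    have b2 := Int.emod_nonneg y h2j.ne'
    have b3 := Int.emod_lt_of_pos x h2j
    have b4 := Int.emod_lt_of_pos y h2j
    have : |t * a| < 2^j := by
      rw [abs_lt]; constructor <;> linarith
    linarith
  have mem : ∀ x : ℤ, 0 ≤ x → x < 2^K → x / 2^j ∈ Finset.Ico (0:ℤ) (2^(K-j)) := by
    intro x h0 h1
    rw [Finset.mem_Ico]
    refine ⟨Int.ediv_nonneg h0 h2j.le, Int.ediv_lt_of_lt_mul h2j ?_⟩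
    rw [← pow_add, Nat.sub_add_cancel hj.le]; exact h1
  have dif : ∀ C ∈ (grid K).filter (fun C => dt g C = s), ∀ C' ∈ (grid K).filter (fun C => dt g C = s),
      C ≠ C' → ∃ t : ℤ, t ≠ 0 ∧ C'.1 = C.1 + t * g.1 ∧ C'.2 = C.2 + t * g.2 := by
    intro C hC C' hC' hne
    rw [Finset.mem_filter] at hC hC'
    obtain ⟨t, ht⟩ := par (c := C' - C) hc (by
      have a := hC.2; have b := hC'.2
      simp only [dt, Prod.fst_sub, Prod.snd_sub] at *; linarith)
    have t1 : C'.1 - C.1 = t * g.1 := by have := congrArg Prod.fst ht; simpa using this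
    have t2 : C'.2 - C.2 = t * g.2 := by have := congrArg Prod.snd ht; simpa using this
    refine ⟨t, ?_, by linarith, by linarith⟩
    rintro rfl
    apply hne
    ext <;> linarith
  rw [← hcard]
  rcases hg with hg | hg
  · apply Finset.card_le_card_of_injOn (fun C => C.1 / 2^j)
    · intro C hC
      have := (mem_grid.mp (Finset.mem_filter.mp hC).1).1
      exact mem _ this.1 this.2
    · intro C hC C' hC' he
      by_contra hne
      obtain ⟨t, ht, e, -⟩ := dif C hC C' hC' hne
      exact sep _ _ t _ ht hg e he
  · apply Finset.card_le_card_of_injOn (fun C => C.2 / 2^j)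
    · intro C hC
      have := (mem_grid.mp (Finset.mem_filter.mp hC).1).2
      exact mem _ this.1 this.2
    · intro C hC C' hC' he
      by_contra hne
      obtain ⟨t, ht, -, e⟩ := dif C hC C' hC' hne
      exact sep _ _ t _ ht hg e he

lemma card_Near {j : ℕ} (hj : j < K) {g : ℤ × ℤ} (hg : g ∈ Box j) (q : ℝ × ℝ) :
    (Near K q g).card ≤ 7 * 2^(K-j) := by
  set φ : ℝ := g.1 * q.2 - g.2 * q.1 with hφ
  have : Near K q g ⊆ (Finset.Icc (⌊φ⌋ - 3) (⌊φ⌋ + 3)).biUnion (fun s => (grid K).filter (fun C => dt g C = s)) := by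
    intro C hC
    rw [Near, Finset.mem_filter, ← hφ, abs_le] at hC
    obtain ⟨h, h1, h2⟩ := hC
    rw [Finset.mem_biUnion]
    refine ⟨dt g C, ?_, Finset.mem_filter.mpr ⟨h, rfl⟩⟩
    have f1 := Int.floor_le φ
    have f2 := Int.lt_floor_add_one φ
    rw [Finset.mem_Icc]
    constructor
    · have : ((⌊φ⌋ - 3 : ℤ) : ℝ) ≤ (dt g C : ℤ) := by push_cast; linarith
      exact_mod_cast this
    · have : ((dt g C : ℤ) : ℝ) < ((⌊φ⌋ + 4 : ℤ):ℝ) := by push_cast; linarith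
      have : dt g C < ⌊φ⌋ + 4 := by exact_mod_cast this
      omega
  refine (Finset.card_le_card this).trans ?_
  refine (Finset.card_biUnion_le_card_mul _ _ (2^(K-j)) (fun s _ => card_line hj hg s)).trans ?_
  apply Nat.mul_le_mul_right
  rw [Int.card_Icc]
  omega

abbrev Tri := (ℤ × ℤ) × (ℤ × ℤ) × (ℤ × ℤ)

lemma count_gen {ι : Type} (Z : Finset Tri) (q : ℝ × ℝ) (T : ℕ → Finset ι)
    (hT : ∀ j < K, (T j).card ≤ 5 * (K - j)) (R : (ℤ × ℤ) → ι → ℕ → (ℤ × ℤ) → Tri → Prop)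
    (hZ : ∀ z ∈ Z, ∃ j < K, ∃ g ∈ Box j, ∃ C ∈ Near K q g, ∃ x ∈ T j, ∃ w < K - j, R g x w C z)
    (hf : ∀ j < K, ∀ g ∈ Box j, ∀ C ∈ Near K q g, ∀ x ∈ T j, ∀ w, (Z.filter (R g x w C)).card ≤ 2) :
    Z.card ≤ 6720 * 4^K := by
  have sub : Z ⊆ (Finset.range K).biUnion (fun j => (Box j).biUnion (fun g => (Near K q g).biUnion (fun C =>
      (T j).biUnion (fun x => (Finset.range (K-j)).biUnion (fun w => Z.filter (R g x w C)))))) := by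
    intro z hz
    obtain ⟨j, hj, g, hg, C, hC, x, hx, w, hw, hr⟩ := hZ z hz
    simp only [Finset.mem_biUnion, Finset.mem_range, Finset.mem_filter]
    exact ⟨j, hj, g, hg, C, hC, x, hx, w, hw, hz, hr⟩
  refine (Finset.card_le_card sub).trans (Finset.card_biUnion_le.trans ?_)
  have hb : ∀ j ∈ Finset.range K, ((Box j).biUnion (fun g => (Near K q g).biUnion (fun C =>
      (T j).biUnion (fun x => (Finset.range (K-j)).biUnion (fun w => Z.filter (R g x w C)))))).card ≤
      1120 * (4^j * 2^(K-j) * (K-j)^2) := by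
    intro j hj
    rw [Finset.mem_range] at hj
    have s1 : ∀ g ∈ Box j, ∀ C ∈ Near K q g, ∀ x ∈ T j,
        ((Finset.range (K-j)).biUnion (fun w => Z.filter (R g x w C))).card ≤ (K-j)*2 := by
      intro g hg C hC x hx
      refine (Finset.card_biUnion_le_card_mul _ _ 2 (fun w _ => hf j hj g hg C hC x hx w)).trans ?_
      simp
    have s2 : ∀ g ∈ Box j, ∀ C ∈ Near K q g, ((T j).biUnion (fun x => (Finset.range (K-j)).biUnion
        (fun w => Z.filter (R g x w C)))).card ≤ 5*(K-j)*((K-j)*2) := by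
      intro g hg C hC
      exact (Finset.card_biUnion_le_card_mul _ _ _ (fun x hx => s1 g hg C hC x hx)).trans
        (Nat.mul_le_mul_right _ (hT j hj))
    have s3 : ∀ g ∈ Box j, ((Near K q g).biUnion (fun C => (T j).biUnion (fun x => (Finset.range (K-j)).biUnion
        (fun w => Z.filter (R g x w C))))).card ≤ 7*2^(K-j)*(5*(K-j)*((K-j)*2)) := by
      intro g hg
      exact (Finset.card_biUnion_le_card_mul _ _ _ (fun C hC => s2 g hg C hC)).trans
        (Nat.mul_le_mul_right _ (card_Near hj hg q))
    refine ((Finset.card_biUnion_le_card_mul _ _ _ s3).trans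
        (Nat.mul_le_mul_right _ (card_Box j))).trans (le_of_eq ?_)
    ring
  refine (Finset.sum_le_sum hb).trans ?_
  rw [← Finset.mul_sum]
  have := sum_bound K
  calc _ ≤ 1120 * (6 * 4^K) := Nat.mul_le_mul_left _ (by omega)
    _ = _ := by ring
end


section
variable {K L : ℕ} {P : ℤ × ℤ → ℕ → ℝ × ℝ}

lemma fib (hG : Good K L P) (hL : 0 < L) {g C : ℤ × ℤ} (hg : g ≠ 0) (w : ℕ) {l1 l2 l3 : ℕ} (h1 : l1 < L)
    (h2 : l2 < L) (h3 : l3 < L) (q : ℝ × ℝ) (Z : Finset Tri)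
    (hZ : ∀ z ∈ Z, z.1 ∈ grid K ∧ z.2.1 ∈ grid K ∧ z.2.2 ∈ grid K ∧ Emp K P (P z.1 l1) (P z.2.1 l2) (P z.2.2 l3) ∧
      Cl (P z.1 l1) (P z.2.1 l2) (P z.2.2 l3) q ∧ q ≠ P z.2.2 l3) (R : Tri → Prop)
    (hR : ∀ z ∈ Z, R z → z.2.2 = C ∧ z.2.1 = z.1 + (2^w : ℤ) • g ∧ ∃ σ, Prog K L P g z.1 C σ)
    (hd : ∀ z ∈ Z, R z → ∀ z' ∈ Z, R z' → ∃ t : ℤ, z'.1 = z.1 + t • g) : (Z.filter R).card ≤ 2 := by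
  rcases (Z.filter R).eq_empty_or_nonempty with h | ⟨z0, hz0⟩
  · rw [h]; simp
  have hq : q ≠ P C l3 := by
    rw [Finset.mem_filter] at hz0
    rw [← (hR z0 hz0.1 hz0.2).1]
    exact (hZ z0 hz0.1).2.2.2.2.2
  have hi : Set.InjOn (fun z : Tri => z.1) (Z.filter R : Finset Tri) := by
    intro z hz z' hz' he
    simp only [Finset.coe_filter, Set.mem_ofPred_eq] at hz hz'
    obtain ⟨a1, a2, -⟩ := hR z hz.1 hz.2
    obtain ⟨b1, b2, -⟩ := hR z' hz'.1 hz'.2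
    simp only at he
    refine Prod.ext he (Prod.ext ?_ ?_)
    · rw [a2, b2, he]
    · rw [a1, b1]
  rw [← Finset.card_image_of_injOn hi]
  apply fiber_two hG hL hg w h1 h2 h3 q hq
  · intro A hA
    rw [Finset.mem_image] at hA
    obtain ⟨z, hz, rfl⟩ := hA
    rw [Finset.mem_filter] at hz
    obtain ⟨c1, c2, c3⟩ := hR z hz.1 hz.2
    obtain ⟨b1, b2, b3, b4, b5, b6⟩ := hZ z hz.1
    rw [c1, c2] at b4 b5
    rw [c2] at b2
    exact ⟨b1, b2, c3, b4, b5⟩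
  · intro A hA A' hA'
    rw [Finset.mem_image] at hA hA'
    obtain ⟨z, hz, rfl⟩ := hA
    obtain ⟨z', hz', rfl⟩ := hA'
    rw [Finset.mem_filter] at hz hz'
    exact hd z hz.1 hz.2 z' hz'.1 hz'.2

lemma near_mem (hG : Good K L P) {A B C g : ℤ × ℤ} (hA : A ∈ grid K) (hB : B ∈ grid K) (hC : C ∈ grid K)
    {l1 l2 l3 : ℕ} (h1 : l1 < L) (h2 : l2 < L) (h3 : l3 < L) {q : ℝ × ℝ}
    (g1 : |g.1| < 2^K) (g2 : |g.2| < 2^K) (h0 : orient (P A l1) (P B l2) (P C l3) ≠ 0)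
    (hcl : Cl (P A l1) (P B l2) (P C l3) q) (hB' : dt g B = dt g A) (hC' : |dt g C - dt g A| ≤ 2) :
    C ∈ Near K q g := by
  have hq := cl_hull h0 hcl
  set S : Set (ℝ × ℝ) := {x | |(g.1:ℝ) * x.2 - g.2 * x.1 - dt g C| ≤ 3} with hS
  have hconv : Convex ℝ S := by
    intro x hx y hy a b ha hb hab
    simp only [hS, Set.mem_ofPred_eq, abs_le, Prod.fst_add, Prod.snd_add, Prod.smul_fst, Prod.smul_snd, smul_eq_mul] at *
    obtain ⟨x1, x2⟩ := hx
    obtain ⟨y1, y2⟩ := hy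
    have hb' : b = 1 - a := by linarith
    subst hb'
    constructor <;> nlinarith
  have near : ∀ X ∈ grid K, ∀ l < L, |(dt g X : ℝ) - dt g C| ≤ 2 → P X l ∈ S := by
    intro X hX l hl hd
    obtain ⟨a1, a2⟩ := hG.f5 X hX l hl
    have k1 : (|(g.1:ℝ)|) ≤ 2^K := by exact_mod_cast g1.le
    have k2 : (|(g.2:ℝ)|) ≤ 2^K := by exact_mod_cast g2.le
    have hp : (0:ℝ) < 2^K := by positivity
    have e : (2:ℝ)^K * (1/2^(K+2)) = 1/4 := by rw [pow_add]; field_simp; norm_num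
    have m1 : |(g.1:ℝ) * ((P X l).2 - X.2)| ≤ 1/4 := by
      rw [abs_mul, ← e]; exact mul_le_mul k1 a2 (abs_nonneg _) hp.le
    have m2 : |(g.2:ℝ) * ((P X l).1 - X.1)| ≤ 1/4 := by
      rw [abs_mul, ← e]; exact mul_le_mul k2 a1 (abs_nonneg _) hp.le
    have e2 : (dt g X : ℝ) = g.1 * X.2 - g.2 * X.1 := by simp [dt]
    simp only [hS, Set.mem_ofPred_eq]
    rw [e2] at hd
    rw [abs_le] at *
    constructor <;> linarith
  have hsub : convexHull ℝ {P A l1, P B l2, P C l3} ⊆ S := by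
    apply convexHull_min _ hconv
    have hAC : |(dt g A : ℝ) - dt g C| ≤ 2 := by
      rw [abs_sub_comm]; exact_mod_cast hC'
    rintro x (rfl | rfl | rfl)
    · exact near A hA l1 h1 hAC
    · apply near B hB l2 h2; rw [hB']; exact hAC
    · apply near C hC l3 h3; simp
  have := hsub hq
  simp only [hS, Set.mem_ofPred_eq] at this
  rw [Near, Finset.mem_filter]
  refine ⟨hC, ?_⟩
  rw [abs_sub_comm]; exact this

lemma size1 {A B g : ℤ × ℤ} (hA : A ∈ grid K) (hB : B ∈ grid K) {N : ℤ} (hN : 0 < N) (h : B = A + N • g) :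
    N * |g.1| < 2^K ∧ N * |g.2| < 2^K := by
  rw [mem_grid] at hA hB
  have e1 : B.1 - A.1 = N * g.1 := by rw [h]; simp
  have e2 : B.2 - A.2 = N * g.2 := by rw [h]; simp
  have : ∀ x, N * |x| = |N * x| := fun x => by rw [abs_mul, abs_of_pos hN]
  rw [this, this, ← e1, ← e2, abs_lt, abs_lt]
  omega

lemma size2 {A B g : ℤ × ℤ} (hA : A ∈ grid K) (hB : B ∈ grid K) {s : ℕ} (h : B = A + (2^s:ℤ) • g)
    (hc : IsCoprime g.1 g.2) : ∃ j < K, g ∈ Box j ∧ s < K - j ∧ |g.1| < 2^K ∧ |g.2| < 2^K := by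
  have hp : (1:ℤ) ≤ 2^s := one_le_pow₀ (by norm_num)
  obtain ⟨s1, s2⟩ := size1 hA hB (by omega) h
  have t1 : |g.1| < 2^K := by nlinarith [abs_nonneg g.1]
  have t2 : |g.2| < 2^K := by nlinarith [abs_nonneg g.2]
  obtain ⟨j, hj, hg⟩ := mem_Box hc t1 t2
  refine ⟨j, hj, hg, ?_, t1, t2⟩
  rw [Box, Finset.mem_filter] at hg
  have : (2:ℤ)^(s+j) < 2^K := by
    rw [pow_add]
    rcases hg.2.2 with h | h <;> nlinarith
  have := (pow_lt_pow_iff_right₀ (by norm_num : (1:ℤ) < 2)).mp this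
  omega

def Zf (K : ℕ) (P : ℤ × ℤ → ℕ → ℝ × ℝ) (l1 l2 l3 : ℕ) (q : ℝ × ℝ) (Ty : (ℤ × ℤ) → (ℤ × ℤ) → (ℤ × ℤ) → Prop) : Finset Tri :=
  (grid K ×ˢ grid K ×ˢ grid K).filter (fun z => Ty z.1 z.2.1 z.2.2 ∧ Emp K P (P z.1 l1) (P z.2.1 l2) (P z.2.2 l3) ∧
      Cl (P z.1 l1) (P z.2.1 l2) (P z.2.2 l3) q ∧ q ≠ P z.2.2 l3)

lemma mem_Zf {l1 l2 l3 : ℕ} {q : ℝ × ℝ} {Ty : (ℤ × ℤ) → (ℤ × ℤ) → (ℤ × ℤ) → Prop} {z : Tri} :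
    z ∈ Zf K P l1 l2 l3 q Ty ↔ (z.1 ∈ grid K ∧ z.2.1 ∈ grid K ∧ z.2.2 ∈ grid K) ∧ Ty z.1 z.2.1 z.2.2 ∧
      Emp K P (P z.1 l1) (P z.2.1 l2) (P z.2.2 l3) ∧
      Cl (P z.1 l1) (P z.2.1 l2) (P z.2.2 l3) q ∧ q ≠ P z.2.2 l3 := by
  simp only [Zf, Finset.mem_filter, Finset.mem_product]

lemma card_off (hG : Good K L P) (hL : 0 < L) {l1 l2 l3 : ℕ} (h1 : l1 < L)
    (h2 : l2 < L) (h3 : l3 < L) (q : ℝ × ℝ) : (Zf K P l1 l2 l3 q TypOff).card ≤ 6720 * 4^K := by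
  apply count_gen (K := K) _ q (fun _ => (Finset.Icc (-2:ℤ) 2).erase 0) (ι := ℤ) (fun j hj => by
    have : ((Finset.Icc (-2:ℤ) 2).erase 0).card = 4 := by decide
    show ((Finset.Icc (-2:ℤ) 2).erase 0).card ≤ _
    rw [this]; omega) (fun g d w C z => z.2.2 = C ∧ z.2.1 = z.1 + (2^w : ℤ) • g ∧ dt g (C - z.1) = d)
  · intro z hz
    rw [mem_Zf] at hz
    obtain ⟨⟨gA, gB, gC⟩, ⟨g, hc, n, hn, hB, hd0, hd2⟩, he, hcl, hq⟩ := hz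
    obtain ⟨σ, hp⟩ := prog_off hG gC hd0
    have e : z.1 + (0:ℤ) • g = z.1 := by module
    obtain ⟨w, hw⟩ := pow_two_len hG (cop_ne hc) hL hp hn (by rwa [e]) (by rwa [← hB]) h1 h2 h3 (by rwa [e, ← hB])
    rw [sub_zero] at hw
    have hs := sgn_prog hp hn gA (by rwa [← hB])
    rw [← hB] at hs
    rw [hw] at hB
    obtain ⟨j, hj, hg, hwj, g1, g2⟩ := size2 gA gB hB hc
    refine ⟨j, hj, g, hg, z.2.2, ?_, dt g (z.2.2 - z.1), ?_, w, hwj, rfl, hB, rfl⟩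
    · apply near_mem hG gA gB gC h1 h2 h3 g1 g2 (hs.ne h1 h2 h3) hcl
      · rw [hB]; simp [dt]; ring
      · rwa [show dt g z.2.2 - dt g z.1 = dt g (z.2.2 - z.1) by simp [dt]; ring]
    · simp only [Finset.mem_erase, Finset.mem_Icc]
      rw [abs_le] at hd2
      exact ⟨hd0, hd2⟩
  · intro j hj g hg C hC d hd w
    have hc : IsCoprime g.1 g.2 := by
      rw [Box, Finset.mem_filter] at hg; exact hg.2.1
    apply fib hG hL (cop_ne hc) w h1 h2 h3 q
    · intro z hz
      rw [mem_Zf] at hz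
      exact ⟨hz.1.1, hz.1.2.1, hz.1.2.2, hz.2.2⟩
    · rintro z hz ⟨r1, r2, r3⟩
      refine ⟨r1, r2, prog_off hG ?_ ?_⟩
      · rw [Near, Finset.mem_filter] at hC; exact hC.1
      · rw [r3]; exact (Finset.mem_erase.mp hd).1
    · rintro z - ⟨r1, r2, r3⟩ z' - ⟨s1, s2, s3⟩
      obtain ⟨t, ht⟩ := par (c := z'.1 - z.1) hc (by
        simp only [dt, Prod.fst_sub, Prod.snd_sub] at *; linarith)
      exact ⟨t, by rw [← ht]; abel⟩

lemma card_on (hG : Good K L P) (hL : 0 < L) {l1 l2 l3 : ℕ} (h1 : l1 < L)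
    (h2 : l2 < L) (h3 : l3 < L) (q : ℝ × ℝ) : (Zf K P l1 l2 l3 q TypOn).card ≤ 6720 * 4^K := by
  apply count_gen (K := K) _ q (fun j => Finset.range (K - j)) (ι := ℕ) (fun j hj => by
    rw [Finset.card_range]; omega) (fun g v w C z => z.2.2 = C ∧ z.2.1 = z.1 + (2^w : ℤ) • (2^(v+1) : ℤ) • g ∧
      ∃ r : ℤ, Odd r ∧ C = z.1 + (2^v*r) • g)
  · intro z hz
    rw [mem_Zf] at hz
    obtain ⟨⟨gA, gB, gC⟩, ⟨g, hc, v, n, r, hn, hr, hB, hCr⟩, he, hcl, hq⟩ := hz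
    obtain ⟨σ, hp⟩ := prog_on hG (cop_ne hc) gC hr hCr
    have e : z.1 + (0:ℤ) • (2^(v+1) : ℤ) • g = z.1 := by module
    have hB2 : z.2.1 = z.1 + n • (2^(v+1) : ℤ) • g := by rw [hB]; module
    have hg0 : (2^(v+1) : ℤ) • g ≠ 0 := smul_ne_zero (by positivity) (cop_ne hc)
    obtain ⟨w, hw⟩ := pow_two_len hG hg0 hL hp hn (by rwa [e]) (by rwa [← hB2]) h1 h2 h3 (by rwa [e, ← hB2])
    rw [sub_zero] at hw
    have hs := sgn_prog hp hn gA (by rwa [← hB2])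
    rw [← hB2] at hs
    have hB3 : z.2.1 = z.1 + (2^(v+1+w) : ℤ) • g := by rw [hB, hw]; congr 1; ring_nf
    obtain ⟨j, hj, hg, hwj, g1, g2⟩ := size2 gA gB hB3 hc
    refine ⟨j, hj, g, hg, z.2.2, ?_, v, ?_, w, by omega, rfl, by rw [hB2, hw], r, hr, hCr⟩
    · apply near_mem hG gA gB gC h1 h2 h3 g1 g2 (hs.ne h1 h2 h3) hcl
      · rw [hB]; simp [dt]; ring
      · rw [show dt g z.2.2 - dt g z.1 = 0 by rw [hCr]; simp [dt]; ring]; norm_num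
    · rw [Finset.mem_range]; omega
  · intro j hj g hg C hC v hv w
    have hc : IsCoprime g.1 g.2 := by
      rw [Box, Finset.mem_filter] at hg; exact hg.2.1
    have hg0 : (2^(v+1) : ℤ) • g ≠ 0 := smul_ne_zero (by positivity) (cop_ne hc)
    apply fib hG hL hg0 w h1 h2 h3 q
    · intro z hz
      rw [mem_Zf] at hz
      exact ⟨hz.1.1, hz.1.2.1, hz.1.2.2, hz.2.2⟩
    · rintro z hz ⟨r1, r2, r, hr, r3⟩
      refine ⟨r1, r2, prog_on hG (cop_ne hc) ?_ hr r3⟩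
      rw [Near, Finset.mem_filter] at hC; exact hC.1
    · rintro z - ⟨r1, r2, r, ⟨k, rfl⟩, r3⟩ z' - ⟨s1, s2, s, ⟨k', rfl⟩, s3⟩
      refine ⟨k - k', ?_⟩
      have : z'.1 = C - (2^v*(2*k'+1)) • g := by rw [s3]; abel
      rw [this, r3, pow_succ]; module

lemma emp_lattice (hG : Good K L P) {A B C : ℤ × ℤ} (hA : A ∈ grid K) (hB : B ∈ grid K) (hC : C ∈ grid K)
    {l1 l2 l3 : ℕ} (h1 : l1 < L) (h2 : l2 < L) (h3 : l3 < L) (hD : 0 < det3 A B C)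
    (he : Emp K P (P A l1) (P B l2) (P C l3)) : TypOff A B C ∨ TypOff A C B ∨ TypOff B C A := by
  apply lattice_tri hD
  rintro U ⟨u1, u2, u3⟩
  have hU := inside_grid hA hB hC u1 u2 u3
  have hL : 0 < L := by omega
  have k := hG.f1 A hA B hB C hC l1 h1 l2 h2 l3 h3 hD
  exact he U hU ⟨mul_pos k (hG.f1 A hA B hB U hU l1 h1 l2 h2 0 hL u1),
    mul_pos k (hG.f1 B hB C hC U hU l2 h2 l3 h3 0 hL u2), mul_pos k (hG.f1 C hC A hA U hU l3 h3 l1 h1 0 hL u3)⟩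

def Typ (A B C : ℤ × ℤ) : Prop := TypOff A B C ∨ TypOn A B C

lemma Ins.swap_iff {a b c p : ℝ × ℝ} : Ins a b c p ↔ Ins b a c p := ⟨Ins.swap, Ins.swap⟩

lemma typ_perm (hG : Good K L P) {A B C : ℤ × ℤ} (hA : A ∈ grid K) (hB : B ∈ grid K) (hC : C ∈ grid K)
    (n1 : A ≠ B) (n2 : A ≠ C) (n3 : B ≠ C)
    {l1 l2 l3 : ℕ} (h1 : l1 < L) (h2 : l2 < L) (h3 : l3 < L)
    (he : Emp K P (P A l1) (P B l2) (P C l3)) :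
    (Typ A B C ∨ Typ B A C) ∨ (Typ A C B ∨ Typ C A B) ∨ (Typ B C A ∨ Typ C B A) := by
  unfold Typ
  rcases lt_trichotomy (det3 A B C) 0 with h | h | h
  · have he' : Emp K P (P B l2) (P A l1) (P C l3) := fun U hU hi => he U hU hi.swap
    rcases emp_lattice hG hB hA hC h2 h1 h3 (by
      have : det3 B A C = - det3 A B C := by simp only [det3]; ring
      omega) he' with h | h | h <;> simp [h]
  · rcases collinear_typ n1 n2 n3 h with (h | h) | (h | h) | (h | h) <;> simp [h]
  · rcases emp_lattice hG hA hB hC h1 h2 h3 h he with h | h | h <;> simp [h]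

lemma card_typ (hG : Good K L P) (hL : 0 < L) {l1 l2 l3 : ℕ} (h1 : l1 < L)
    (h2 : l2 < L) (h3 : l3 < L) (q : ℝ × ℝ) : (Zf K P l1 l2 l3 q Typ).card ≤ 13440 * 4^K := by
  have : Zf K P l1 l2 l3 q Typ ⊆ Zf K P l1 l2 l3 q TypOff ∪ Zf K P l1 l2 l3 q TypOn := by
    intro z hz
    rw [Finset.mem_union]
    rw [mem_Zf] at *
    rw [mem_Zf]
    obtain ⟨a, b | b, c⟩ := hz
    · exact Or.inl ⟨a, b, c⟩
    · exact Or.inr ⟨a, b, c⟩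
  refine (Finset.card_le_card this).trans ((Finset.card_union_le _ _).trans ?_)
  have a := card_off hG hL h1 h2 h3 q
  have b := card_on hG hL h1 h2 h3 q
  omega
end


section
variable {K L : ℕ} {P : ℤ × ℤ → ℕ → ℝ × ℝ}

lemma card_grid : (grid K).card = 4^K := by
  rw [grid, Finset.card_product, Int.card_Ico, sub_zero,
    show ((2:ℤ)^K) = ((2^K : ℕ):ℤ) by push_cast; rfl, Int.toNat_natCast, ← mul_pow]; norm_num

lemma other (hK : 1 ≤ K) (A : ℤ × ℤ) : ∃ B ∈ grid K, A ≠ B := by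
  have h2 : (2:ℤ) ≤ 2^K := by
    calc (2:ℤ) = 2^1 := by norm_num
      _ ≤ 2^K := pow_le_pow_right₀ (by norm_num) hK
  by_cases h : A = (0,0)
  · exact ⟨(1,1), by rw [mem_grid]; simp; omega, by rw [h]; simp⟩
  · exact ⟨(0,0), by rw [mem_grid]; simp, h⟩

lemma f3_ne (hG : Good K L P) {A B : ℤ × ℤ} (hA : A ∈ grid K) (hB : B ∈ grid K) (h : A ≠ B) {l l' l'' : ℕ}
    (hl : l < L) (hl' : l' < L) (hl'' : l'' < L) (hn : l ≠ l') : orient (P A l) (P A l') (P B l'') ≠ 0 := by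
  rcases lt_or_gt_of_ne hn with h1 | h1
  · have := hG.f3 A hA B hB h l l' h1 hl' l'' hl''
    intro h0; rw [h0] at this; simp at this
  · have := hG.f3 A hA B hB h l' l h1 hl l'' hl''
    rw [orient_swap] at this
    intro h0; rw [h0] at this; simp at this

lemma P_inj (hG : Good K L P) (hK : 1 ≤ K) {A B : ℤ × ℤ} (hA : A ∈ grid K) (hB : B ∈ grid K) {l l' : ℕ}
    (hl : l < L) (hl' : l' < L) (he : P A l = P B l') : A = B ∧ l = l' := by
  by_cases h : A = B
  · refine ⟨h, ?_⟩
    subst h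
    by_contra hn
    obtain ⟨B, hB, hne⟩ := other hK A
    have := f3_ne hG hA hB hne hl hl' hl hn
    rw [he] at this
    apply this; simp [orient]
  · exact absurd he (P_ne hG hA hB h hl hl')

lemma ins_swap_emp {a b c : ℝ × ℝ} (h : Emp K P a b c) : Emp K P b a c := fun U hU hi => h U hU hi.swap
lemma ins_rot_emp {a b c : ℝ × ℝ} (h : Emp K P a b c) : Emp K P b c a := fun U hU hi => h U hU hi.rot.rot

lemma orient_idx (hG : Good K L P) {A B C : ℤ × ℤ} (hA : A ∈ grid K) (hB : B ∈ grid K) (hC : C ∈ grid K)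
    {l1 l2 l3 : ℕ} (h1 : l1 < L) (h2 : l2 < L) (h3 : l3 < L) (n1 : P A l1 ≠ P B l2) (n2 : P A l1 ≠ P C l3)
    (n3 : P B l2 ≠ P C l3) : orient (P A l1) (P B l2) (P C l3) ≠ 0 := by
  by_cases e1 : A = B
  · subst e1
    have m1 : l1 ≠ l2 := by rintro rfl; exact n1 rfl
    by_cases e2 : A = C
    · subst e2
      have m2 : l1 ≠ l3 := by rintro rfl; exact n2 rfl
      have m3 : l2 ≠ l3 := by rintro rfl; exact n3 rfl
      rcases lt_or_gt_of_ne m1 with a | a <;> rcases lt_or_gt_of_ne m2 with b | b <;>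
        rcases lt_or_gt_of_ne m3 with c | c
      · exact (hG.f4 A hA l1 l2 l3 a c h3).ne
      · have := hG.f4 A hA l1 l3 l2 b c h2
        rw [← orient_rot, orient_swap, orient_rot] at this
        intro h0
        rw [← orient_rot, ← orient_rot] at h0
        rw [← orient_rot] at h0
        linarith
      · omega
      · have := hG.f4 A hA l3 l1 l2 b a h2
        rw [← orient_rot] at this; exact this.ne
      · have := hG.f4 A hA l2 l1 l3 a b h3
        rw [orient_swap] at this
        intro h0; linarith
      · omega
      · have := hG.f4 A hA l2 l3 l1 c b h1
        rw [orient_rot] at this; exact this.ne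
      · have := hG.f4 A hA l3 l2 l1 c a h1
        rw [orient_swap, orient_rot] at this
        intro h0
        linarith
    · exact f3_ne hG hA hC e2 h1 h2 h3 m1
  · by_cases e2 : A = C
    · subst e2
      have m2 : l1 ≠ l3 := by rintro rfl; exact n2 rfl
      rw [← orient_rot, ← orient_rot]
      exact f3_ne hG hA hB e1 h3 h1 h2 (Ne.symm m2)
    · by_cases e3 : B = C
      · subst e3
        have m3 : l2 ≠ l3 := by rintro rfl; exact n3 rfl
        rw [← orient_rot]
        exact f3_ne hG hB hA (Ne.symm e1) h2 h3 h1 m3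
      · exact (sgn hG hA hB hC e1 e2 e3).ne h1 h2 h3

def pts (P : ℤ × ℤ → ℕ → ℝ × ℝ) (T : Finset ((ℤ × ℤ) × ℕ)) : Finset (ℝ × ℝ) := T.image (fun i => P i.1 i.2)

structure Idx (K k : ℕ) (T : Finset ((ℤ × ℤ) × ℕ)) : Prop where
  lo : ∀ A ∈ grid K, ∀ l < k, (A, l) ∈ T
  hi : ∀ A l, (A, l) ∈ T → A ∈ grid K ∧ l < k + 1

lemma mem_pts {k : ℕ} {T : Finset ((ℤ × ℤ) × ℕ)} (hT : Idx K k T) {x : ℝ × ℝ} (hx : x ∈ (pts P T : Set (ℝ × ℝ))) :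
    ∃ A ∈ grid K, ∃ l < k + 1, x = P A l := by
  rw [Finset.mem_coe, pts, Finset.mem_image] at hx
  obtain ⟨⟨A, l⟩, h, rfl⟩ := hx
  exact ⟨A, (hT.hi A l h).1, l, (hT.hi A l h).2, rfl⟩

lemma card_pts {k : ℕ} {T : Finset ((ℤ × ℤ) × ℕ)} (hT : Idx K k T) (hG : Good K (k+1) P) (hK : 1 ≤ K) :
    (pts P T).card = T.card := by
  apply Finset.card_image_of_injOn
  rintro ⟨A, l⟩ h ⟨B, l'⟩ h' he
  obtain ⟨a, b⟩ := P_inj hG hK (hT.hi A l h).1 (hT.hi B l' h').1 (hT.hi A l h).2 (hT.hi B l' h').2 he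
  rw [a, b]

lemma gp_pts {k : ℕ} {T : Finset ((ℤ × ℤ) × ℕ)} (hT : Idx K k T) (hG : Good K (k+1) P) :
    GeneralPosition (pts P T : Set (ℝ × ℝ)) := by
  intro a ha b hb c hc n1 n2 n3 hcol
  obtain ⟨A, hA, l1, h1, rfl⟩ := mem_pts hT ha
  obtain ⟨B, hB, l2, h2, rfl⟩ := mem_pts hT hb
  obtain ⟨C, hC, l3, h3, rfl⟩ := mem_pts hT hc
  exact orient_idx hG hA hB hC h1 h2 h3 n1 n2 n3 (collinear_orient hcol)

/-- a representation of a triangle -/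
def TRep (K L : ℕ) (P : ℤ × ℤ → ℕ → ℝ × ℝ) (t : Finset (ℝ × ℝ)) (A B C : ℤ × ℤ) (l1 l2 l3 : ℕ) : Prop :=
  t = {P A l1, P B l2, P C l3} ∧ orient (P A l1) (P B l2) (P C l3) ≠ 0 ∧ Emp K P (P A l1) (P B l2) (P C l3) ∧
    A ∈ grid K ∧ B ∈ grid K ∧ C ∈ grid K ∧ l1 < L ∧ l2 < L ∧ l3 < L

lemma TRep.rot {t : Finset (ℝ × ℝ)} {A B C : ℤ × ℤ} {l1 l2 l3 : ℕ} (h : TRep K L P t A B C l1 l2 l3) :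
    TRep K L P t B C A l2 l3 l1 := by
  obtain ⟨a, b, c, d, e, f, g, h, i⟩ := h
  refine ⟨?_, by rwa [orient_rot], ins_rot_emp c, e, f, d, h, i, g⟩
  rw [a]; ext x; simp only [Finset.mem_insert, Finset.mem_singleton]; tauto

lemma TRep.swap {t : Finset (ℝ × ℝ)} {A B C : ℤ × ℤ} {l1 l2 l3 : ℕ} (h : TRep K L P t A B C l1 l2 l3) :
    TRep K L P t B A C l2 l1 l3 := by
  obtain ⟨a, b, c, d, e, f, g, h, i⟩ := h
  refine ⟨?_, by rwa [orient_swap, neg_ne_zero], ins_swap_emp c, e, d, f, h, g, i⟩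
  rw [a]; ext x; simp only [Finset.mem_insert, Finset.mem_singleton]; tauto

lemma exists_rep {k : ℕ} {T : Finset ((ℤ × ℤ) × ℕ)} (hT : Idx K k T) (hG : Good K (k+1) P) (hk : 1 ≤ k)
    {t : Finset (ℝ × ℝ)} (ht : IsEmptyTriangleOf (pts P T) t) :
    ∃ A B C l1 l2 l3, TRep K (k+1) P t A B C l1 l2 l3 ∧
      ((A = B ∧ B = C) ∨ (A = B ∧ A ≠ C) ∨ Typ A B C) := by
  obtain ⟨hc3, hsub, -, hemp⟩ := ht
  obtain ⟨a, b, c, n1, n2, n3, rfl⟩ := Finset.card_eq_three.mp hc3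
  obtain ⟨A, hA, l1, h1, rfl⟩ := mem_pts hT (hsub (by simp : a ∈ _))
  obtain ⟨B, hB, l2, h2, rfl⟩ := mem_pts hT (hsub (by simp : b ∈ _))
  obtain ⟨C, hC, l3, h3, rfl⟩ := mem_pts hT (hsub (by simp : c ∈ _))
  have h0 := orient_idx hG hA hB hC h1 h2 h3 n1 n2 n3
  have he : Emp K P (P A l1) (P B l2) (P C l3) := by
    intro U hU hi
    apply hemp (P U 0)
    · rw [Finset.mem_coe, pts, Finset.mem_image]
      exact ⟨(U, 0), hT.lo U hU 0 (by omega), rfl⟩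
    · rw [← interior_iff h0] at hi
      simpa using hi
  have hr : TRep K (k+1) P {P A l1, P B l2, P C l3} A B C l1 l2 l3 := ⟨rfl, h0, he, hA, hB, hC, h1, h2, h3⟩
  by_cases e1 : A = B
  · by_cases e2 : A = C
    · exact ⟨_, _, _, _, _, _, hr, Or.inl ⟨e1, e1 ▸ e2⟩⟩
    · exact ⟨_, _, _, _, _, _, hr, Or.inr (Or.inl ⟨e1, e2⟩)⟩
  · by_cases e2 : A = C
    · exact ⟨_, _, _, _, _, _, hr.rot.rot, Or.inr (Or.inl ⟨e2.symm, fun h => e1 (e2.trans h)⟩)⟩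
    · by_cases e3 : B = C
      · exact ⟨_, _, _, _, _, _, hr.rot, Or.inr (Or.inl ⟨e3, fun h => e1 h.symm⟩)⟩
      · rcases typ_perm hG hA hB hC e1 e2 e3 h1 h2 h3 he with (h | h) | (h | h) | (h | h)
        · exact ⟨_, _, _, _, _, _, hr, Or.inr (Or.inr h)⟩
        · exact ⟨_, _, _, _, _, _, hr.swap, Or.inr (Or.inr h)⟩
        · exact ⟨_, _, _, _, _, _, hr.swap.rot, Or.inr (Or.inr h)⟩
        · exact ⟨_, _, _, _, _, _, hr.rot.rot, Or.inr (Or.inr h)⟩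
        · exact ⟨_, _, _, _, _, _, hr.rot, Or.inr (Or.inr h)⟩
        · exact ⟨_, _, _, _, _, _, hr.rot.swap, Or.inr (Or.inr h)⟩

lemma cover (𝒯 : Set (Finset (ℝ × ℝ))) (Z : ℕ × ℕ × ℕ → Finset Tri) (N : ℕ)
    (hZ : ∀ l1 < L, ∀ l2 < L, ∀ l3 < L, (Z (l1, l2, l3)).card ≤ N)
    (h : ∀ t ∈ 𝒯, ∃ l1 < L, ∃ l2 < L, ∃ l3 < L, ∃ z ∈ Z (l1, l2, l3), t = {P z.1 l1, P z.2.1 l2, P z.2.2 l3}) :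
    𝒯.ncard ≤ L^3 * N := by
  set W : Finset (Finset (ℝ × ℝ)) := (Finset.range L ×ˢ Finset.range L ×ˢ Finset.range L).biUnion
    (fun l => (Z l).image (fun z => {P z.1 l.1, P z.2.1 l.2.1, P z.2.2 l.2.2})) with hW
  have sub : 𝒯 ⊆ (W : Set (Finset (ℝ × ℝ))) := by
    intro t ht
    obtain ⟨l1, h1, l2, h2, l3, h3, z, hz, rfl⟩ := h t ht
    rw [Finset.mem_coe, hW, Finset.mem_biUnion]
    exact ⟨(l1, l2, l3), by simp [h1, h2, h3], Finset.mem_image.mpr ⟨z, hz, rfl⟩⟩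
  refine (Set.ncard_le_ncard sub W.finite_toSet).trans ?_
  rw [Set.ncard_coe_finset]
  refine (Finset.card_biUnion_le_card_mul _ _ N ?_).trans (le_of_eq ?_)
  · rintro ⟨l1, l2, l3⟩ hl
    simp only [Finset.mem_product, Finset.mem_range] at hl
    exact Finset.card_image_le.trans (hZ l1 hl.1 l2 hl.2.1 l3 hl.2.2)
  · simp only [Finset.card_product, Finset.card_range]; ring

lemma card_Z2 (hG : Good K L P) {l1 l2 l3 : ℕ} (h1 : l1 < L) (h2 : l2 < L) (h3 : l3 < L) (q : ℝ × ℝ) :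
    ((grid K ×ˢ grid K ×ˢ grid K).filter (fun z : Tri => z.1 = z.2.1 ∧ z.1 ≠ z.2.2 ∧
      Ins (P z.1 l1) (P z.1 l2) (P z.2.2 l3) q)).card ≤ 4^K := by
  rw [← card_grid (K := K)]
  apply Finset.card_le_card_of_injOn (fun z => z.2.2)
  · intro z hz
    simp only [Finset.coe_filter, Finset.mem_product, Set.mem_ofPred_eq] at hz
    exact hz.1.2.2
  · rintro ⟨A, A1, C⟩ hz ⟨A', A1', C'⟩ hz' he
    simp only [Finset.coe_filter, Finset.mem_product, Set.mem_ofPred_eq] at hz hz' he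
    obtain ⟨⟨a1, a2, a3⟩, rfl, a4, a5⟩ := hz
    obtain ⟨⟨b1, b2, b3⟩, rfl, b4, b5⟩ := hz'
    subst he
    by_cases hAA : A = A'
    · rw [hAA]
    exfalso
    obtain ⟨σ, hs⟩ := sgn hG a1 b1 a3 hAA a4 b4
    have o1 : orient (P A l1) (P A l2) (P C l3) ≠ 0 := by
      intro h0; have := a5.1; rw [h0] at this; simp at this
    have o2 : orient (P A' l1) (P A' l2) (P C l3) ≠ 0 := by
      intro h0; have := b5.1; rw [h0] at this; simp at this
    have hq : q ≠ P C l3 := by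
      rintro rfl
      have := a5.2.1
      simp [orient] at this
      have e : orient (P A l2) (P C l3) (P C l3) = 0 := by simp only [orient]; ring
      have h := a5.2.1
      rw [e] at h; simp at h
    exact cone_lemma o1 o2 a5.cl b5.cl hq (hs l1 h1 l1 h1 l3 h3) (hs l1 h1 l2 h2 l3 h3)
      (hs l2 h2 l1 h1 l3 h3) (hs l2 h2 l2 h2 l3 h3)

lemma cl_vertex {a b c : ℝ × ℝ} : Cl a b c a := by
  refine ⟨?_, ?_, ?_⟩
  · rw [show orient a b a = 0 by simp only [orient]; ring, mul_zero]
  · rw [orient_rot a b c]; exact mul_self_nonneg (orient a b c)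
  · rw [show orient c a a = 0 by simp only [orient]; ring, mul_zero]

lemma stab_bound {k : ℕ} {T : Finset ((ℤ × ℤ) × ℕ)} (hT : Idx K k T) (hG : Good K (k+1) P) (hk : 1 ≤ k)
    (q : ℝ × ℝ) : stabbedCount (pts P T : Set (ℝ × ℝ)) q ≤ (k+1)^3 * (13442 * 4^K) := by
  apply cover (L := k+1) (P := P) _ (fun l => ((grid K).image (fun A => (A, A, A)) ∪
    (grid K ×ˢ grid K ×ˢ grid K).filter (fun z : Tri => z.1 = z.2.1 ∧ z.1 ≠ z.2.2 ∧
      Ins (P z.1 l.1) (P z.1 l.2.1) (P z.2.2 l.2.2) q)) ∪ Zf K P l.1 l.2.1 l.2.2 q Typ)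
  · intro l1 h1 l2 h2 l3 h3
    have c1 : ((grid K).image (fun A => (A, A, A))).card ≤ 4^K := by
      rw [← card_grid (K := K)]; exact Finset.card_image_le
    have c2 := card_Z2 hG h1 h2 h3 q
    have c3 := card_typ hG (by omega) h1 h2 h3 q
    refine (Finset.card_union_le _ _).trans ((Nat.add_le_add_right (Finset.card_union_le _ _) _).trans ?_)
    simp only at *
    omega
  · rintro t ⟨ht, hq⟩
    obtain ⟨A, B, C, l1, l2, l3, hr, hc⟩ := exists_rep hT hG hk ht
    obtain ⟨rfl, h0, he, hA, hB, hC, h1, h2, h3⟩ := hr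
    have hi : Ins (P A l1) (P B l2) (P C l3) q := by
      rw [← interior_iff h0]; simpa using hq
    have hqc : q ≠ P C l3 := by
      rintro rfl
      have e : orient (P B l2) (P C l3) (P C l3) = 0 := by simp only [orient]; ring
      have h := hi.2.1
      rw [e] at h; simp at h
    refine ⟨l1, h1, l2, h2, l3, h3, (A, B, C), ?_, rfl⟩
    simp only [Finset.mem_union]
    rcases hc with ⟨rfl, rfl⟩ | ⟨rfl, hne⟩ | hty
    · left; left; exact Finset.mem_image.mpr ⟨A, hA, rfl⟩
    · left; right
      simp only [Finset.mem_filter, Finset.mem_product]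
      exact ⟨⟨hA, hA, hC⟩, trivial, hne, hi⟩
    · right; rw [mem_Zf]; exact ⟨⟨hA, hB, hC⟩, hty, he, hi.cl, hqc⟩

lemma tau_upper {k : ℕ} {T : Finset ((ℤ × ℤ) × ℕ)} (hT : Idx K k T) (hG : Good K (k+1) P) (hk : 1 ≤ k) :
    tau (pts P T : Set (ℝ × ℝ)) ≤ (k+1)^3 * (13442 * (4^K * 4^K)) := by
  apply cover (L := k+1) (P := P) _ (fun l => ((grid K).image (fun A => (A, A, A)) ∪
    (grid K ×ˢ grid K).image (fun z => (z.1, z.1, z.2))) ∪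
      (grid K).biUnion (fun X => Zf K P l.1 l.2.1 l.2.2 (P X l.1) Typ))
  · intro l1 h1 l2 h2 l3 h3
    have c1 : ((grid K).image (fun A => (A, A, A))).card ≤ 4^K := by
      rw [← card_grid (K := K)]; exact Finset.card_image_le
    have c2 : ((grid K ×ˢ grid K).image (fun z => (z.1, z.1, z.2))).card ≤ 4^K * 4^K := by
      rw [← card_grid (K := K), ← Finset.card_product]; exact Finset.card_image_le
    have c3 : ((grid K).biUnion (fun X => Zf K P l1 l2 l3 (P X l1) Typ)).card ≤ 4^K * (13440 * 4^K) := by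
      conv_rhs => rw [← card_grid (K := K)]
      apply Finset.card_biUnion_le_card_mul
      intro X hX
      rw [card_grid]
      exact card_typ hG (by omega) h1 h2 h3 _
    refine (Finset.card_union_le _ _).trans ((Nat.add_le_add_right (Finset.card_union_le _ _) _).trans ?_)
    simp only at *
    have : (1:ℕ) ≤ 4^K := Nat.one_le_pow _ _ (by norm_num)
    nlinarith
  · rintro t ht
    obtain ⟨A, B, C, l1, l2, l3, hr, hc⟩ := exists_rep hT hG hk ht
    obtain ⟨rfl, h0, he, hA, hB, hC, h1, h2, h3⟩ := hr
    refine ⟨l1, h1, l2, h2, l3, h3, (A, B, C), ?_, rfl⟩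
    simp only [Finset.mem_union]
    rcases hc with ⟨rfl, rfl⟩ | ⟨rfl, hne⟩ | hty
    · left; left; exact Finset.mem_image.mpr ⟨A, hA, rfl⟩
    · left; right
      exact Finset.mem_image.mpr ⟨(A, C), by simp [hA, hC], rfl⟩
    · right; rw [Finset.mem_biUnion]
      refine ⟨A, hA, ?_⟩
      rw [mem_Zf]
      refine ⟨⟨hA, hB, hC⟩, hty, he, cl_vertex, ?_⟩
      intro hh
      simp only at hh
      apply h0; rw [hh]; simp only [orient]; ring
end


section
variable {K L : ℕ} {P : ℤ × ℤ → ℕ → ℝ × ℝ}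

lemma neg_of_mul_pos_neg {s x : ℝ} (hs : s < 0) (h : 0 < s * x) : x < 0 := by
  by_contra hc
  push Not at hc
  nlinarith

lemma aab_empty (hG : Good K L P) {A B : ℤ × ℤ} (hA : A ∈ grid K) (hB : B ∈ grid K) (h : B.2 < A.2)
    {l l' l'' : ℕ} (hll : l < l') (hl' : l' < L) (hl'' : l'' < L) {U : ℤ × ℤ} (hU : U ∈ grid K) {m : ℕ} (hm : m < L) :
    ¬ Ins (P A l) (P A l') (P B l'') (P U m) := by
  intro hi
  have hAB : A ≠ B := by rintro rfl; omega
  have gA := mem_grid.mp hA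
  have gB := mem_grid.mp hB
  have s1 : (2^K * (B.2 - A.2) - (B.1 - A.1) : ℤ) < 0 := by
    have : (0:ℤ) < 2^K := by positivity
    nlinarith
  have s2 : (0:ℤ) < (2^K * (A.2 - B.2) - (A.1 - B.1) : ℤ) := by
    have : (0:ℤ) < 2^K := by positivity
    nlinarith
  have s1' : ((2^K * (B.2 - A.2) - (B.1 - A.1) : ℤ) : ℝ) < 0 := by exact_mod_cast s1
  have s2' : (0:ℝ) < ((2^K * (A.2 - B.2) - (A.1 - B.1) : ℤ) : ℝ) := by exact_mod_cast s2
  have hn : ∀ i j k : ℕ, i < j → j < L → k < L → orient (P A i) (P A j) (P B k) < 0 := fun i j k a b c =>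
    neg_of_mul_pos_neg s1' (hG.f3 A hA B hB hAB i j a b k c)
  have hp : ∀ i j k : ℕ, i < j → j < L → k < L → 0 < orient (P B i) (P B j) (P A k) := fun i j k a b c =>
    (pos_iff_pos_of_mul_pos (hG.f3 B hB A hA (Ne.symm hAB) i j a b k c)).mp s2'
  obtain ⟨i1, i2, i3⟩ := hi
  have o := hn l l' l'' hll hl' hl''
  have i1 := neg_of_mul_pos_neg o i1
  have i2 := neg_of_mul_pos_neg o i2
  have i3 := neg_of_mul_pos_neg o i3
  by_cases e1 : U = A
  · subst e1
    rcases lt_trichotomy m l with c | c | c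
    · have := hn m l l'' c (by omega) hl''
      have e : orient (P B l'') (P U l) (P U m) = - orient (P U m) (P U l) (P B l'') := by simp only [orient]; ring
      linarith
    · subst c
      have e : orient (P U m) (P U l') (P U m) = 0 := by simp only [orient]; ring
      linarith
    · rcases lt_trichotomy m l' with d | d | d
      · have := hG.f4 U hA l m l' c d hl'
        have e : orient (P U l) (P U m) (P U l') = - orient (P U l) (P U l') (P U m) := by simp only [orient]; ring
        linarith
      · subst d
        have e : orient (P U l) (P U m) (P U m) = 0 := by simp only [orient]; ring
        linarith
      · have := hn l' m l'' d hm hl''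
        have e : orient (P U l') (P B l'') (P U m) = - orient (P U l') (P U m) (P B l'') := by simp only [orient]; ring
        linarith
  by_cases e2 : U = B
  · subst e2
    rcases lt_trichotomy m l'' with c | c | c
    · have := hp m l'' l c hl'' (by omega)
      have e : orient (P U l'') (P A l) (P U m) = orient (P U m) (P U l'') (P A l) := by simp only [orient]; ring
      linarith
    · subst c
      have e : orient (P A l') (P U m) (P U m) = 0 := by simp only [orient]; ring
      linarith
    · have := hp l'' m l' c hm hl'
      have e : orient (P A l') (P U l'') (P U m) = orient (P U l'') (P U m) (P A l') := by simp only [orient]; ring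
      linarith
  · obtain ⟨σ, hs⟩ := sgn hG hA hB hU hAB (Ne.symm e1) (Ne.symm e2)
    have k1 := hs l (by omega) l'' hl'' m hm
    have k2 := hs l' hl' l'' hl'' m hm
    have e : orient (P B l'') (P A l) (P U m) = - orient (P A l) (P B l'') (P U m) := orient_swap _ _ _
    rcases le_total 0 σ with h | h <;> nlinarith

lemma tau_lower {k : ℕ} {T : Finset ((ℤ × ℤ) × ℕ)} (hT : Idx K k T) (hG : Good K (k+1) P) (hK : 1 ≤ K) :
    (2^K * 2^(K-1)) * ((2^K * 2^(K-1)) * ((k/2) * ((k - k/2) * k))) ≤ tau (pts P T : Set (ℝ × ℝ)) := by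
  set M : Finset ((ℤ × ℤ) × (ℤ × ℤ) × ℕ × ℕ × ℕ) :=
    (Finset.Ico (0:ℤ) (2^K) ×ˢ Finset.Ico (2^(K-1):ℤ) (2^K)) ×ˢ (Finset.Ico (0:ℤ) (2^K) ×ˢ Finset.Ico (0:ℤ) (2^(K-1)))
      ×ˢ Finset.range (k/2) ×ˢ Finset.Ico (k/2) k ×ˢ Finset.range k with hM
  have hpow : (2:ℤ)^K = 2^(K-1) + 2^(K-1) := by
    rw [← mul_two, ← pow_succ, Nat.sub_add_cancel hK]
  have hpos : (0:ℤ) < 2^(K-1) := by positivity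
  have tn : ∀ j : ℕ, ((2:ℤ)^j).toNat = 2^j := by
    intro j
    rw [show ((2:ℤ)^j) = ((2^j : ℕ):ℤ) by push_cast; rfl, Int.toNat_natCast]
  have hcard : M.card = (2^K * 2^(K-1)) * ((2^K * 2^(K-1)) * ((k/2) * ((k - k/2) * k))) := by
    simp only [hM, Finset.card_product, Int.card_Ico, Nat.card_Ico, Finset.card_range, sub_zero, tn]
    rw [show (2:ℤ)^K - 2^(K-1) = 2^(K-1) by linarith, tn]
  have hmem : ∀ x ∈ M, x.1 ∈ grid K ∧ x.2.1 ∈ grid K ∧ (2:ℤ)^(K-1) ≤ x.1.2 ∧ x.2.1.2 < 2^(K-1) ∧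
      x.2.2.1 < k/2 ∧ k/2 ≤ x.2.2.2.1 ∧ x.2.2.2.1 < k ∧ x.2.2.2.2 < k := by
    intro x hx
    simp only [hM, Finset.mem_product, Finset.mem_Ico, Finset.mem_range] at hx
    rw [mem_grid, mem_grid]
    omega
  set F : (ℤ × ℤ) × (ℤ × ℤ) × ℕ × ℕ × ℕ → Finset ((ℤ × ℤ) × ℕ) :=
    fun x => {(x.1, x.2.2.1), (x.1, x.2.2.2.1), (x.2.1, x.2.2.2.2)} with hF
  have hFT : ∀ x ∈ M, F x ⊆ T := by
    intro x hx i hi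
    obtain ⟨a, b, c, d, e, f, g, h⟩ := hmem x hx
    simp only [hF, Finset.mem_insert, Finset.mem_singleton] at hi
    rcases hi with rfl | rfl | rfl
    · exact hT.lo _ a _ (by omega)
    · exact hT.lo _ a _ (by omega)
    · exact hT.lo _ b _ (by omega)
  have hinjT : Set.InjOn (fun i : (ℤ × ℤ) × ℕ => P i.1 i.2) (T : Set ((ℤ × ℤ) × ℕ)) := by
    rintro ⟨A, l⟩ h ⟨B, l'⟩ h' he
    obtain ⟨a, b⟩ := P_inj hG hK (hT.hi A l h).1 (hT.hi B l' h').1 (hT.hi A l h).2 (hT.hi B l' h').2 he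
    rw [a, b]
  have hFinj : Set.InjOn F (M : Set _) := by
    intro x hx y hy he
    obtain ⟨a, b, c, d, e, f, g, h⟩ := hmem x hx
    obtain ⟨a', b', c', d', e', f', g', h'⟩ := hmem y hy
    obtain ⟨A, B, l, m, n⟩ := x
    obtain ⟨A', B', l', m', n'⟩ := y
    simp only [hF] at *
    have k1 : (A, l) ∈ ({(A', l'), (A', m'), (B', n')} : Finset ((ℤ × ℤ) × ℕ)) := by rw [← he]; simp
    have k2 : (A, m) ∈ ({(A', l'), (A', m'), (B', n')} : Finset ((ℤ × ℤ) × ℕ)) := by rw [← he]; simp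
    have k3 : (B, n) ∈ ({(A', l'), (A', m'), (B', n')} : Finset ((ℤ × ℤ) × ℕ)) := by rw [← he]; simp
    have nAB : A ≠ B' := by rintro rfl; omega
    have nBA : B ≠ A' := by rintro rfl; omega
    have n1 : l ≠ m' := by omega
    have n2 : m ≠ l' := by omega
    simp only [Finset.mem_insert, Finset.mem_singleton, Prod.mk.injEq] at k1 k2 k3
    simp only [Prod.mk.injEq]
    tauto
  have hsub : (↑(M.image (fun x => (F x).image (fun i => P i.1 i.2))) : Set (Finset (ℝ × ℝ))) ⊆
      {t | IsEmptyTriangleOf (pts P T) t} := by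
    intro t ht
    rw [Finset.mem_coe, Finset.mem_image] at ht
    obtain ⟨x, hx, rfl⟩ := ht
    obtain ⟨a, b, c, d, e, f, g, h⟩ := hmem x hx
    have himg : (F x).image (fun i => P i.1 i.2) = {P x.1 x.2.2.1, P x.1 x.2.2.2.1, P x.2.1 x.2.2.2.2} := by
      simp [hF, Finset.image_insert]
    have hne : x.1 ≠ x.2.1 := by intro h0; rw [← h0] at d; omega
    have h0 := f3_ne hG a b hne (l := x.2.2.1) (l' := x.2.2.2.1) (l'' := x.2.2.2.2) (by omega) (by omega)
      (by omega) (by omega)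
    refine ⟨?_, ?_, ?_, ?_⟩
    · rw [Finset.card_image_of_injOn (hinjT.mono (by exact_mod_cast hFT x hx))]
      rw [hF, Finset.card_eq_three]
      refine ⟨_, _, _, ?_, ?_, ?_, rfl⟩
      · simp only [ne_eq, Prod.mk.injEq]; omega
      · simp only [ne_eq, Prod.mk.injEq]; tauto
      · simp only [ne_eq, Prod.mk.injEq]; tauto
    · rw [pts]
      exact_mod_cast Finset.image_subset_image (hFT x hx)
    · rw [himg]
      intro hcol
      push_cast at hcol
      exact h0 (collinear_orient hcol)
    · intro p hp hin
      obtain ⟨U, hU, m, hm, rfl⟩ := mem_pts hT hp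
      rw [himg] at hin
      push_cast at hin
      rw [interior_iff h0] at hin
      exact aab_empty hG a b (by omega) (by omega) (by omega) (by omega) hU hm hin
  have hfin : {t | IsEmptyTriangleOf (pts P T : Set (ℝ × ℝ)) t}.Finite := by
    apply ((pts P T).powerset : Finset _).finite_toSet.subset
    intro t ht
    rw [Finset.mem_coe, Finset.mem_powerset]
    exact_mod_cast ht.2.1
  rw [tau, ← hcard]
  refine le_trans (le_of_eq ?_) (Set.ncard_le_ncard hsub hfin)
  rw [Set.ncard_coe_finset, Finset.card_image_of_injOn]
  intro x hx y hy he
  apply hFinj hx hy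
  simp only at he
  rw [← Finset.coe_inj] at he ⊢
  rw [Finset.coe_image, Finset.coe_image] at he
  exact (hinjT.image_eq_image_iff (by exact_mod_cast hFT x hx) (by exact_mod_cast hFT y hy)).mp he

lemma construct (K k n : ℕ) (hK : 1 ≤ K) (hk : 2 ≤ k) (h1 : 4^K * k ≤ n) (h2 : n ≤ 4^K * (k+1)) :
    ∃ S : Finset (ℝ × ℝ), S.card = n ∧ GeneralPosition ↑S ∧
      (4^K * 4^K * k^3 : ℝ) / 64 ≤ tau ↑S ∧ (tau ↑S : ℝ) ≤ 13442 * 8 * (4^K * 4^K * k^3) ∧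
      ∀ q, (stabbedCount ↑S q : ℝ) ≤ 13442 * 8 * (4^K * k^3) := by
  obtain ⟨P, hG⟩ := exists_good K (k+1)
  obtain ⟨T, t1, t2, t3⟩ := Finset.exists_subsuperset_card_eq
    (s := grid K ×ˢ Finset.range k) (t := grid K ×ˢ Finset.range (k+1)) (n := n)
    (Finset.product_subset_product_right (Finset.range_mono (by omega)))
    (by rw [Finset.card_product, card_grid, Finset.card_range]; exact h1)
    (by rw [Finset.card_product, card_grid, Finset.card_range]; exact h2)
  have hT : Idx K k T := by
    constructor
    · intro A hA l hl
      exact t1 (by simp [hA, hl])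
    · intro A l h
      have := t2 h
      simp only [Finset.mem_product, Finset.mem_range] at this
      exact this
  have hk1 : ((k+1 : ℕ) : ℝ)^3 ≤ 8 * (k:ℝ)^3 := by
    have : ((k+1 : ℕ) : ℝ) ≤ 2 * k := by
      have : (2:ℝ) ≤ k := by exact_mod_cast hk
      push_cast; linarith
    calc ((k+1 : ℕ) : ℝ)^3 ≤ (2*k)^3 := by gcongr
      _ = _ := by ring
  refine ⟨pts P T, by rw [card_pts hT hG hK, t3], gp_pts hT hG, ?_, ?_, ?_⟩
  · have := tau_lower hT hG hK
    refine le_trans ?_ (Nat.cast_le.mpr this)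
    obtain ⟨K', rfl⟩ : ∃ K', K = K' + 1 := ⟨K - 1, by omega⟩
    have hh : k^2 ≤ 8 * ((k/2) * (k - k/2)) := by
      obtain ⟨a, ha⟩ : ∃ a, a = k/2 := ⟨_, rfl⟩
      obtain ⟨b, hb⟩ : ∃ b, b = k - k/2 := ⟨_, rfl⟩
      rw [← ha] at hb ⊢
      rw [← hb]
      have : k = a + b := by omega
      have : 1 ≤ a := by omega
      have : b ≤ a + 1 := by omega
      have : a ≤ b := by omega
      subst k
      nlinarith
    have hh' : (k:ℝ)^2 ≤ 8 * (((k/2 : ℕ):ℝ) * ((k - k/2 : ℕ):ℝ)) := by exact_mod_cast hh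
    rw [Nat.add_sub_cancel]
    push_cast only [Nat.cast_mul, Nat.cast_pow]
    have e4 : (4:ℝ)^(K'+1) = 4 * (2^K' * 2^K') := by rw [← mul_pow, pow_succ]; norm_num; ring
    rw [e4]
    have e2 : (2:ℝ)^(K'+1) = 2 * 2^K' := by rw [pow_succ]; ring
    simp only [Nat.cast_ofNat, e2]
    have hp : (0:ℝ) < 2^K' := by positivity
    have hq : (0:ℝ) ≤ (2^K')^4 * k := by positivity
    nlinarith [mul_le_mul_of_nonneg_left hh' hq]
  · refine le_trans (Nat.cast_le.mpr (tau_upper hT hG (by omega))) ?_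
    rw [Nat.cast_mul, Nat.cast_pow]
    push_cast only [Nat.cast_mul, Nat.cast_pow, Nat.cast_ofNat]
    have : (0:ℝ) ≤ 13442 * (4^K * 4^K) := by positivity
    nlinarith [mul_le_mul_of_nonneg_left hk1 this]
  · intro q
    refine le_trans (Nat.cast_le.mpr (stab_bound hT hG (by omega) q)) ?_
    rw [Nat.cast_mul, Nat.cast_pow]
    push_cast only [Nat.cast_mul, Nat.cast_pow, Nat.cast_ofNat]
    have : (0:ℝ) ≤ 13442 * 4^K := by positivity
    nlinarith [mul_le_mul_of_nonneg_left hk1 this]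
end


lemma choose_K (x : ℝ) (hx : 1 ≤ x) (n : ℕ) (hn : 8 ≤ n) (hxn : x ≤ n) :
    ∃ K : ℕ, 1 ≤ K ∧ (4:ℝ)^K ≤ 4 * x ∧ x ≤ 16 * 4^K ∧ 2 * 4^K ≤ n := by
  obtain ⟨e, h1, h2⟩ := exists_nat_pow_near hx (by norm_num : (1:ℝ) < 4)
  by_cases he : e ≤ 2
  · refine ⟨1, le_refl _, by linarith, ?_, by omega⟩
    have : (4:ℝ)^(e+1) ≤ 4^3 := pow_le_pow_right₀ (by norm_num) (by omega)
    linarith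
  · obtain ⟨K, rfl⟩ : ∃ K, e = K + 1 := ⟨e - 1, by omega⟩
    have hp : (0:ℝ) < 4^K := by positivity
    rw [pow_succ] at h1
    rw [pow_succ, pow_succ] at h2
    refine ⟨K, by omega, by linarith, by linarith, ?_⟩
    have : ((2 * 4^K : ℕ) : ℝ) ≤ n := by push_cast; linarith
    exact_mod_cast this

/-- **No Selection Lemma for empty triangles.** For every `0 ≤ α ≤ 1` there are constants
`c₁, c₂, C > 0` such that every sufficiently large `n` admits a set `S` of `n` points in
general position with `c₁ n^(3-α) ≤ τ(S) ≤ c₂ n^(3-α)` in which every point of the plane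
stabs at most `C n^(3-2α)` empty triangles. -/
theorem no_selection_lemma_for_empty_triangles (α : ℝ) (hα0 : 0 ≤ α) (hα1 : α ≤ 1) :
    ∃ c₁ c₂ C : ℝ, 0 < c₁ ∧ 0 < c₂ ∧ 0 < C ∧ ∃ N : ℕ, ∀ n : ℕ, N ≤ n →
      ∃ S : Finset (ℝ × ℝ), S.card = n ∧ GeneralPosition ↑S ∧
        c₁ * (n : ℝ) ^ (3 - α) ≤ (tau ↑S : ℝ) ∧
        (tau ↑S : ℝ) ≤ c₂ * (n : ℝ) ^ (3 - α) ∧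
        ∀ q : ℝ × ℝ, (stabbedCount ↑S q : ℝ) ≤ C * (n : ℝ) ^ (3 - 2 * α) := by
  refine ⟨1/2048, 13442 * 8 * 16, 13442 * 8 * 256, by norm_num, by norm_num, by norm_num, 8, ?_⟩
  intro n hn
  have hn1 : (1:ℝ) ≤ n := by exact_mod_cast (by omega : 1 ≤ n)
  have hn0 : (0:ℝ) < n := by linarith
  set x : ℝ := (n:ℝ)^α with hx
  have hx1 : 1 ≤ x := Real.one_le_rpow hn1 hα0
  have hxn : x ≤ n := by
    calc x ≤ (n:ℝ)^(1:ℝ) := Real.rpow_le_rpow_of_exponent_le hn1 hα1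
      _ = n := Real.rpow_one _
  have e1 : (n:ℝ)^(3 - α) = n^3 / x := by
    rw [Real.rpow_sub hn0, hx]; norm_cast
  have e2 : (n:ℝ)^(3 - 2*α) = n^3 / x^2 := by
    rw [Real.rpow_sub hn0, hx, ← Real.rpow_natCast ((n:ℝ)^α) 2, ← Real.rpow_mul hn0.le, mul_comm α]
    norm_cast
  obtain ⟨K, hK, k1, k2, k3⟩ := choose_K x hx1 n hn hxn
  have h4 : 0 < 4^K := by positivity
  have d1 : 4^K * (n / 4^K) ≤ n := Nat.mul_div_le n _
  have d2 : n ≤ 4^K * (n / 4^K + 1) := by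
    have := Nat.lt_mul_div_succ n h4
    exact this.le
  have d3 : 2 ≤ n / 4^K := by rw [Nat.le_div_iff_mul_le h4]; exact k3
  obtain ⟨S, s1, s2, s3, s4, s5⟩ := construct K (n / 4^K) n hK d3 d1 d2
  generalize n / 4^K = k at *
  refine ⟨S, s1, s2, ?_, ?_, ?_⟩
  all_goals
    have d1' : (4:ℝ)^K * k ≤ n := by exact_mod_cast d1
    have d2' : (n:ℝ) ≤ 2 * (4^K * k) := by
      have a : (n:ℝ) ≤ 4^K * (k+1) := by exact_mod_cast d2
      have b : (2:ℝ) ≤ k := by exact_mod_cast d3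
      have c : (0:ℝ) < 4^K := by positivity
      nlinarith
    have hm : (0:ℝ) < 4^K := by positivity
    have hk0 : (0:ℝ) ≤ k := by positivity
    generalize (4:ℝ)^K = m at *
    have hx0 : 0 < x := by linarith
    have c1 : (m*k)^3 ≤ (n:ℝ)^3 := by gcongr
    have c2 : (n:ℝ)^3 ≤ 8 * (m*k)^3 := by
      calc (n:ℝ)^3 ≤ (2*(m*k))^3 := by gcongr
        _ = _ := by ring
  · refine le_trans ?_ s3
    rw [e1, mul_div_assoc', div_le_iff₀ hx0]
    have : (0:ℝ) ≤ m * m * k^3 := by positivity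
    nlinarith [mul_le_mul_of_nonneg_left k1 this]
  · refine s4.trans ?_
    rw [e1, mul_div_assoc', le_div_iff₀ hx0]
    have : (0:ℝ) ≤ m * m * k^3 := by positivity
    nlinarith [mul_le_mul_of_nonneg_left k2 this]
  · intro q
    refine (s5 q).trans ?_
    rw [e2, mul_div_assoc', le_div_iff₀ (by positivity)]
    have h : (0:ℝ) ≤ m * k^3 := by positivity
    have hsq : x^2 ≤ 256 * (m*m) := by
      calc x^2 ≤ (16*m)^2 := by gcongr
        _ = _ := by ring
    nlinarith [mul_le_mul_of_nonneg_left hsq h]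
end
end

section
/- Let H be a Horton set with at least 4 points. An edge spanned by two points of H is visible from below if and only if its endpoints are two consecutive points (in x-order) of H_b, where b is a binary string consisting of a single 1 followed by an arbitrary number (possibly zero) of 0s; and an edge is visible from above if and only if its endpoints are two consecutive points of H_b, where b is a binary string consisting of a single 0 followed by an arbitrary number (possibly zero) of 1s. -/
open scoped Classical

noncomputable section

/-- `H_b` for a binary string `b` (first character applied first):
recursively take the odd (`true`) or even (`false`) part. -/
def subPart (H : Finset (ℝ × ℝ)) : List Bool → Finset (ℝ × ℝ)
  | [] => H
  | b :: rest => subPart (if b then oddPart H else evenPart H) rest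

/-- `u` and `v` are consecutive points (in `x`-order) of `S`, with `u` to the left of `v`. -/
def ConsecutiveIn (S : Finset (ℝ × ℝ)) (u v : ℝ × ℝ) : Prop :=
  u ∈ S ∧ v ∈ S ∧ u.1 < v.1 ∧ ∀ w ∈ S, ¬ (u.1 < w.1 ∧ w.1 < v.1)

/-- The edge `(u, v)` of `H` (with `u.1 < v.1`, both endpoints in `H₁`) is visible from
below: every point of `H₁` strictly between them lies strictly above the line `uv`. -/
def VisibleFromBelow (H : Finset (ℝ × ℝ)) (u v : ℝ × ℝ) : Prop :=
  u ∈ oddPart H ∧ v ∈ oddPart H ∧ u.1 < v.1 ∧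
    ∀ w ∈ oddPart H, u.1 < w.1 → w.1 < v.1 → StrictlyAbove w u v

/-- The edge `(u, v)` of `H` (with `u.1 < v.1`, both endpoints in `H₀`) is visible from
above: every point of `H₀` strictly between them lies strictly below the line `uv`. -/
def VisibleFromAbove (H : Finset (ℝ × ℝ)) (u v : ℝ × ℝ) : Prop :=
  u ∈ evenPart H ∧ v ∈ evenPart H ∧ u.1 < v.1 ∧
    ∀ w ∈ evenPart H, u.1 < w.1 → w.1 < v.1 → StrictlyBelow w u v

lemma mem_even {G : Finset (ℝ × ℝ)} {p : ℝ × ℝ} : p ∈ evenPart G ↔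
    p ∈ G ∧ Even (G.filter fun q => q.1 < p.1).card := by
  unfold evenPart; exact Finset.mem_filter

lemma mem_odd {G : Finset (ℝ × ℝ)} {p : ℝ × ℝ} : p ∈ oddPart G ↔
    p ∈ G ∧ ¬ Even (G.filter fun q => q.1 < p.1).card := by
  unfold oddPart; exact Finset.mem_filter

lemma even_or_odd {G : Finset (ℝ × ℝ)} {p : ℝ × ℝ} (hp : p ∈ G) :
    p ∈ evenPart G ∨ p ∈ oddPart G := by
  rw [mem_even, mem_odd]; tauto

lemma consec_parity {G : Finset (ℝ × ℝ)} (hx : DistinctX (G : Set (ℝ × ℝ))) {u v : ℝ × ℝ}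
    (h : ConsecutiveIn G u v) : v ∈ evenPart G ↔ u ∈ oddPart G := by
  obtain ⟨hu, hv, huv, hn⟩ := h
  have key : (G.filter fun q => q.1 < v.1) = insert u (G.filter fun q => q.1 < u.1) := by
    ext q
    simp only [Finset.mem_filter, Finset.mem_insert]
    constructor
    · rintro ⟨hq, hqv⟩
      by_cases hqu : q = u
      · exact Or.inl hqu
      · right
        refine ⟨hq, ?_⟩
        have h1 := hx q (by simpa using hq) u (by simpa using hu) hqu
        rcases lt_or_gt_of_ne h1 with h2 | h2
        · exact h2
        · exact absurd ⟨h2, hqv⟩ (hn q hq)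
    · rintro (rfl | ⟨hq, hqu⟩)
      · exact ⟨hu, huv⟩
      · exact ⟨hq, hqu.trans huv⟩
  have hc : (G.filter fun q => q.1 < v.1).card = (G.filter fun q => q.1 < u.1).card + 1 := by
    rw [key, Finset.card_insert_of_notMem (by simp)]
  rw [mem_even, mem_odd, hc, Nat.even_add_one]
  tauto

lemma exists_next {G : Finset (ℝ × ℝ)} {u v w : ℝ × ℝ} (hu : u ∈ G)
    (hw : w ∈ G) (h1 : u.1 < w.1) (h2 : w.1 < v.1) :
    ∃ z, ConsecutiveIn G u z ∧ z.1 < v.1 := by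
  obtain ⟨z, hz, hm⟩ := Finset.exists_min_image (G.filter fun q => u.1 < q.1) (fun q => q.1)
    ⟨w, by simp [hw, h1]⟩
  simp only [Finset.mem_filter] at hz hm
  exact ⟨z, ⟨hu, hz.1, hz.2, fun y hy hh => absurd (hm y ⟨hy, hh.1⟩) (not_le.2 hh.2)⟩,
    (hm w ⟨hw, h1⟩).trans_lt h2⟩

lemma exists_prev {G : Finset (ℝ × ℝ)} {u v w : ℝ × ℝ} (hv : v ∈ G)
    (hw : w ∈ G) (h1 : u.1 < w.1) (h2 : w.1 < v.1) :
    ∃ z, ConsecutiveIn G z v ∧ u.1 < z.1 := by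
  obtain ⟨z, hz, hm⟩ := Finset.exists_max_image (G.filter fun q => q.1 < v.1) (fun q => q.1)
    ⟨w, by simp [hw, h2]⟩
  simp only [Finset.mem_filter] at hz hm
  exact ⟨z, ⟨hz.1, hv, hz.2, fun y hy hh => absurd (hm y ⟨hy, hh.2⟩) (not_le.2 hh.1)⟩,
    h1.trans_le (hm w ⟨hw, h2⟩)⟩

lemma not_even_and_odd {G : Finset (ℝ × ℝ)} {p : ℝ × ℝ} (h : p ∈ evenPart G)
    (h' : p ∈ oddPart G) : False := by
  rw [mem_even] at h; rw [mem_odd] at h'; exact h'.2 h.2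

lemma exists_even_between {G : Finset (ℝ × ℝ)} (hx : DistinctX (G : Set (ℝ × ℝ)))
    {u v w : ℝ × ℝ} (hu : u ∈ G) (hv : v ∈ G)
    (hw : w ∈ G) (h1 : u.1 < w.1) (h2 : w.1 < v.1) (ho : u ∈ oddPart G ∨ v ∈ oddPart G) :
    ∃ z ∈ evenPart G, u.1 < z.1 ∧ z.1 < v.1 := by
  rcases ho with ho | ho
  · obtain ⟨z, hz, hzv⟩ := exists_next hu hw h1 h2
    exact ⟨z, (consec_parity hx hz).2 ho, hz.2.2.1, hzv⟩
  · obtain ⟨z, hz, hzv⟩ := exists_prev hv hw h1 h2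
    refine ⟨z, ?_, hzv, hz.2.2.1⟩
    rcases even_or_odd hz.1 with h | h
    · exact h
    · exact (not_even_and_odd ((consec_parity hx hz).2 h) ho).elim

lemma exists_odd_between {G : Finset (ℝ × ℝ)} (hx : DistinctX (G : Set (ℝ × ℝ)))
    {u v w : ℝ × ℝ} (hu : u ∈ G) (hv : v ∈ G)
    (hw : w ∈ G) (h1 : u.1 < w.1) (h2 : w.1 < v.1) (ho : u ∈ evenPart G ∨ v ∈ evenPart G) :
    ∃ z ∈ oddPart G, u.1 < z.1 ∧ z.1 < v.1 := by
  rcases ho with ho | ho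
  · obtain ⟨z, hz, hzv⟩ := exists_next hu hw h1 h2
    refine ⟨z, ?_, hz.2.2.1, hzv⟩
    rcases even_or_odd hz.2.1 with h | h
    · exact (not_even_and_odd ho ((consec_parity hx hz).1 h)).elim
    · exact h
  · obtain ⟨z, hz, hzv⟩ := exists_prev hv hw h1 h2
    exact ⟨z, (consec_parity hx hz).1 ho, hzv, hz.2.2.1⟩

lemma no_between_small {G : Finset (ℝ × ℝ)} (hc : G.card ≤ 2) {u v w : ℝ × ℝ} (hu : u ∈ G)
    (hv : v ∈ G) (hw : w ∈ G) (h1 : u.1 < w.1) (h2 : w.1 < v.1) : False := by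
  have : ({u, w, v} : Finset (ℝ × ℝ)).card = 3 := by
    rw [Finset.card_eq_three]
    exact ⟨u, w, v, fun h => by simp [h] at h1, fun h => by rw [h] at h1; linarith,
      fun h => by simp [h] at h2, rfl⟩
  have h3 : ({u, w, v} : Finset (ℝ × ℝ)) ⊆ G := by
    intro x hx
    simp only [Finset.mem_insert, Finset.mem_singleton] at hx
    rcases hx with rfl | rfl | rfl <;> assumption
  have := Finset.card_le_card h3
  omega

lemma subPart_subset (l : List Bool) : ∀ G : Finset (ℝ × ℝ), subPart G l ⊆ G := by
  induction l with
  | nil => intro G; exact subset_rfl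
  | cons b l ih =>
    intro G
    simp only [subPart]
    refine (ih _).trans ?_
    split_ifs
    · exact Finset.filter_subset _ _
    · exact Finset.filter_subset _ _

lemma below_aux (G : Finset (ℝ × ℝ)) (hG : IsHorton G) (u v : ℝ × ℝ) :
    (u ∈ G ∧ v ∈ G ∧ u.1 < v.1 ∧ ∀ w ∈ G, u.1 < w.1 → w.1 < v.1 → StrictlyAbove w u v) ↔
      ∃ k : ℕ, ConsecutiveIn (subPart G (List.replicate k false)) u v := by
  induction hG with
  | small G hgp hx hc =>
    constructor
    · rintro ⟨hu, hv, huv, -⟩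
      exact ⟨0, hu, hv, huv, fun w hw h => no_between_small hc hu hv hw h.1 h.2⟩
    · rintro ⟨k, hu, hv, huv, -⟩
      have hu := subPart_subset _ _ hu
      have hv := subPart_subset _ _ hv
      exact ⟨hu, hv, huv, fun w hw h1 h2 => (no_between_small hc hu hv hw h1 h2).elim⟩
  | split G hgp hx hc h0 h1 hhigh hdeep ih0 ih1 =>
    constructor
    · rintro ⟨hu, hv, huv, hvis⟩
      by_cases hcon : ∀ w ∈ G, ¬ (u.1 < w.1 ∧ w.1 < v.1)
      · exact ⟨0, hu, hv, huv, hcon⟩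
      push Not at hcon
      obtain ⟨w, hw, hw1, hw2⟩ := hcon
      by_cases hb : u ∈ evenPart G ∧ v ∈ evenPart G
      · obtain ⟨k, hk⟩ := ih0.1 ⟨hb.1, hb.2, huv, fun w hw => hvis w (mem_even.1 hw).1⟩
        exact ⟨k + 1, by simpa [List.replicate_succ, subPart] using hk⟩
      exfalso
      have ho : u ∈ oddPart G ∨ v ∈ oddPart G := by
        rcases even_or_odd hu with h | h
        · rcases even_or_odd hv with h' | h'
          · exact (hb ⟨h, h'⟩).elim
          · exact Or.inr h'
        · exact Or.inl h
      obtain ⟨z, hz, hz1, hz2⟩ := exists_even_between hx hu hv hw hw1 hw2 ho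
      have hza := hvis z (mem_even.1 hz).1 hz1 hz2
      unfold StrictlyAbove at hza
      rcases even_or_odd hu with hu' | hu' <;> rcases even_or_odd hv with hv' | hv'
      · exact hb ⟨hu', hv'⟩
      · have := hdeep u hu' z hz hz1 v hv'
        unfold StrictlyAbove at this
        linarith
      · have := hdeep z hz v hv' hz2 u hu'
        unfold StrictlyAbove at this
        linarith
      · have := hhigh u hu' v hv' huv z hz
        unfold StrictlyBelow at this
        linarith
    · rintro ⟨k, hk⟩
      cases k with
      | zero => exact ⟨hk.1, hk.2.1, hk.2.2.1, fun w hw h1 h2 => (hk.2.2.2 w hw ⟨h1, h2⟩).elim⟩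
      | succ k =>
        obtain ⟨hu, hv, huv, hvis⟩ :=
          ih0.2 ⟨k, by simpa [List.replicate_succ, subPart] using hk⟩
        refine ⟨(mem_even.1 hu).1, (mem_even.1 hv).1, huv, fun w hw h1 h2 => ?_⟩
        rcases even_or_odd hw with h | h
        · exact hvis w h h1 h2
        · exact hdeep u hu v hv huv w h

lemma above_aux (G : Finset (ℝ × ℝ)) (hG : IsHorton G) (u v : ℝ × ℝ) :
    (u ∈ G ∧ v ∈ G ∧ u.1 < v.1 ∧ ∀ w ∈ G, u.1 < w.1 → w.1 < v.1 → StrictlyBelow w u v) ↔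
      ∃ k : ℕ, ConsecutiveIn (subPart G (List.replicate k true)) u v := by
  induction hG with
  | small G hgp hx hc =>
    constructor
    · rintro ⟨hu, hv, huv, -⟩
      exact ⟨0, hu, hv, huv, fun w hw h => no_between_small hc hu hv hw h.1 h.2⟩
    · rintro ⟨k, hu, hv, huv, -⟩
      have hu := subPart_subset _ _ hu
      have hv := subPart_subset _ _ hv
      exact ⟨hu, hv, huv, fun w hw h1 h2 => (no_between_small hc hu hv hw h1 h2).elim⟩
  | split G hgp hx hc h0 h1 hhigh hdeep ih0 ih1 =>
    constructor
    · rintro ⟨hu, hv, huv, hvis⟩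
      by_cases hcon : ∀ w ∈ G, ¬ (u.1 < w.1 ∧ w.1 < v.1)
      · exact ⟨0, hu, hv, huv, hcon⟩
      push Not at hcon
      obtain ⟨w, hw, hw1, hw2⟩ := hcon
      by_cases hb : u ∈ oddPart G ∧ v ∈ oddPart G
      · obtain ⟨k, hk⟩ := ih1.1 ⟨hb.1, hb.2, huv, fun w hw => hvis w (mem_odd.1 hw).1⟩
        exact ⟨k + 1, by simpa [List.replicate_succ, subPart] using hk⟩
      exfalso
      have ho : u ∈ evenPart G ∨ v ∈ evenPart G := by
        rcases (even_or_odd hu).symm with h | h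
        · rcases (even_or_odd hv).symm with h' | h'
          · exact (hb ⟨h, h'⟩).elim
          · exact Or.inr h'
        · exact Or.inl h
      obtain ⟨z, hz, hz1, hz2⟩ := exists_odd_between hx hu hv hw hw1 hw2 ho
      have hza := hvis z (mem_odd.1 hz).1 hz1 hz2
      unfold StrictlyBelow at hza
      rcases (even_or_odd hu).symm with hu' | hu' <;> rcases (even_or_odd hv).symm with hv' | hv'
      · exact hb ⟨hu', hv'⟩
      · have := hhigh u hu' z hz hz1 v hv'
        unfold StrictlyBelow at this
        linarith
      · have := hhigh z hz v hv' hz2 u hu'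
        unfold StrictlyBelow at this
        linarith
      · have := hdeep u hu' v hv' huv z hz
        unfold StrictlyAbove at this
        linarith
    · rintro ⟨k, hk⟩
      cases k with
      | zero => exact ⟨hk.1, hk.2.1, hk.2.2.1, fun w hw h1 h2 => (hk.2.2.2 w hw ⟨h1, h2⟩).elim⟩
      | succ k =>
        obtain ⟨hu, hv, huv, hvis⟩ :=
          ih1.2 ⟨k, by simpa [List.replicate_succ, subPart] using hk⟩
        refine ⟨(mem_odd.1 hu).1, (mem_odd.1 hv).1, huv, fun w hw h1 h2 => ?_⟩
        rcases (even_or_odd hw).symm with h | h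
        · exact hvis w h h1 h2
        · exact hhigh u hu v hv huv w h

/-- An edge of a Horton set `H` is visible from below (above) iff its endpoints are two
consecutive points of `H_b`, where `b` is a single `1` (`0`) followed by an arbitrary
number of `0`s (`1`s). -/
theorem visible_iff_consecutive (H : Finset (ℝ × ℝ)) (hH : IsHorton H)
    (hcard : 4 ≤ H.card) (u v : ℝ × ℝ) :
    (VisibleFromBelow H u v ↔
      ∃ k : ℕ, ConsecutiveIn (subPart H (true :: List.replicate k false)) u v) ∧
    (VisibleFromAbove H u v ↔
      ∃ k : ℕ, ConsecutiveIn (subPart H (false :: List.replicate k true)) u v) := by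
  cases hH with
  | small _ _ hc => omega
  | split _ hgp hx hc h0 h1 hh hd =>
    exact ⟨below_aux _ h1 u v, above_aux _ h0 u v⟩
end
end

section
/- Let H = H_0 ∪ H_1 be a Horton set with at least 4 points, and let Δ be an empty triangle of H having vertices in both H_0 and H_1. Let (p_i, p_j) be the edge of Δ whose two endpoints both lie in H_0 or both lie in H_1. Then (p_i, p_j) is a visible edge of H (visible from above if p_i, p_j ∈ H_0, visible from below if p_i, p_j ∈ H_1). -/
open scoped Classical

noncomputable section

theorem mem_interior_tri (a b c w : ℝ × ℝ) (h1 : 0 < orient a b w) (h2 : 0 < orient w b c)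
    (h3 : 0 < orient a w c) : w ∈ interior (convexHull ℝ ({a, b, c} : Set (ℝ × ℝ))) := by
  let U : Set (ℝ × ℝ) := {p | 0 < orient a b p ∧ 0 < orient p b c ∧ 0 < orient a p c}
  have hU : IsOpen U := by
    have e : U = {p | 0 < orient a b p} ∩ ({p | 0 < orient p b c} ∩ {p | 0 < orient a p c}) := rfl
    rw [e]
    refine IsOpen.inter ?_ (IsOpen.inter ?_ ?_) <;>
    · apply isOpen_lt continuous_const
      unfold orient
      fun_prop
  have hs : U ⊆ convexHull ℝ ({a, b, c} : Set (ℝ × ℝ)) := by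
    rintro p ⟨h1, h2, h3⟩
    have hD : orient a b c = orient a b p + orient p b c + orient a p c := by
      unfold orient; ring
    have hpos : 0 < orient a b c := by linarith
    have hv := convex_convexHull ℝ ({a, b, c} : Set (ℝ × ℝ))
    have ha : a ∈ convexHull ℝ ({a, b, c} : Set (ℝ × ℝ)) := subset_convexHull _ _ (by simp)
    have hb : b ∈ convexHull ℝ ({a, b, c} : Set (ℝ × ℝ)) := subset_convexHull _ _ (by simp)
    have hc : c ∈ convexHull ℝ ({a, b, c} : Set (ℝ × ℝ)) := subset_convexHull _ _ (by simp)
    have := hv.sum_mem (t := Finset.univ)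
      (w := ![orient p b c / orient a b c, orient a p c / orient a b c,
        orient a b p / orient a b c]) (z := ![a, b, c])
      (by intro i _; fin_cases i <;> simp <;> positivity)
      (by simp [Fin.sum_univ_three]; field_simp; linarith)
      (by intro i _; fin_cases i <;> simp <;> assumption)
    convert this using 1
    simp only [Fin.sum_univ_three]
    have hne := hpos.ne'
    ext
    · simp
      field_simp
      unfold orient; ring
    · simp
      field_simp
      unfold orient; ring
  exact interior_maximal hs hU ⟨h1, h2, h3⟩

theorem orient_ne_zero (H : Finset (ℝ × ℝ)) (hgp : GeneralPosition ↑H) (a b w : ℝ × ℝ)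
    (ha : a ∈ H) (hb : b ∈ H) (hw : w ∈ H) (h1 : a.1 < w.1) (h2 : w.1 < b.1) :
    orient a b w ≠ 0 := by
  intro h0
  refine hgp a ha b hb w hw ?_ ?_ ?_ ?_
  · rintro rfl; linarith
  · rintro rfl; linarith
  · rintro rfl; linarith
  rw [collinear_iff_of_mem (p₀ := a) (by simp)]
  have hne : b.1 - a.1 ≠ 0 := by linarith
  refine ⟨b - a, ?_⟩
  intro p hp
  simp only [Set.mem_insert_iff, Set.mem_singleton_iff] at hp
  rcases hp with rfl | rfl | rfl
  · exact ⟨0, by simp⟩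
  · exact ⟨1, by simp⟩
  · refine ⟨(p.1 - a.1) / (b.1 - a.1), ?_⟩
    unfold orient at h0
    ext
    · simp; field_simp; ring
    · simp; field_simp; linarith

/-- For an empty triangle of a Horton set `H` with vertices in both `H₀` and `H₁`,
the edge whose endpoints lie in the same half is a visible edge of `H`. -/
theorem empty_triangle_edge_visible (H : Finset (ℝ × ℝ)) (hH : IsHorton H)
    (hcard : 4 ≤ H.card) (a b c : ℝ × ℝ) (ha : a ∈ H) (hb : b ∈ H) (hc : c ∈ H)
    (hab : a.1 < b.1) (hempty : IsEmptyTriangleOf ↑H {a, b, c}) :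
    (a ∈ evenPart H → b ∈ evenPart H → c ∈ oddPart H → VisibleFromAbove H a b) ∧
    (a ∈ oddPart H → b ∈ oddPart H → c ∈ evenPart H → VisibleFromBelow H a b) := by
  have hgp : GeneralPosition ↑H := by cases hH <;> assumption
  have hhd : HighAbove ↑(oddPart H) ↑(evenPart H) ∧ DeepBelow ↑(evenPart H) ↑(oddPart H) := by
    cases hH with
    | small _ _ h => omega
    | split => constructor <;> assumption
  obtain ⟨hhigh, hdeep⟩ := hhd
  obtain ⟨-, -, -, hemp⟩ := hempty
  have hset : ((({a, b, c} : Finset (ℝ × ℝ))) : Set (ℝ × ℝ)) = {a, b, c} := by simp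
  rw [hset] at hemp
  constructor
  · intro hae hbe hco
    refine ⟨hae, hbe, hab, ?_⟩
    intro w hw h1 h2
    have hwH : w ∈ H := (Finset.mem_filter.mp hw).1
    by_contra hn
    have hne := orient_ne_zero H hgp a b w ha hb hwH h1 h2
    have k1 := hdeep a hae w hw h1 c hco
    have k2 := hdeep w hw b hbe h2 c hco
    unfold StrictlyBelow at hn
    unfold StrictlyAbove at k1 k2
    refine hemp w hwH (mem_interior_tri a b c w ?_ ?_ ?_)
    · refine lt_of_le_of_ne ?_ hne.symm
      unfold orient; linarith
    · unfold orient; linarith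
    · unfold orient; linarith
  · intro hao hbo hce
    refine ⟨hao, hbo, hab, ?_⟩
    intro w hw h1 h2
    have hwH : w ∈ H := (Finset.mem_filter.mp hw).1
    by_contra hn
    have hne := orient_ne_zero H hgp a b w ha hb hwH h1 h2
    have k1 := hhigh a hao w hw h1 c hce
    have k2 := hhigh w hw b hbo h2 c hce
    unfold StrictlyAbove at hn
    unfold StrictlyBelow at k1 k2
    rw [Set.insert_comm] at hemp
    refine hemp w hwH (mem_interior_tri b a c w ?_ ?_ ?_)
    · have : orient b a w = - orient a b w := by unfold orient; ring
      rw [this]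
      have h3 : orient a b w < 0 := by
        refine lt_of_le_of_ne ?_ hne
        unfold orient; linarith
      linarith
    · unfold orient; linarith
    · unfold orient; linarith
end
end
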